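/- arXiv:2311.10262 — 3 statements merged into one kernel-verified Lean document; each statement's English description precedes it below -/
import Mathlib

section
/- For every s ∈ (0,2], if the series Σ_w φ_s(A_w) over all nonempty words w converges, then the Hausdorff dimension of the Rauzy gasket satisfies dimH X ≤ s. In particular dimH X ≤ s_A. -/
/-!
The column sums of every `A_w` satisfy the triangle inequality, so if the last two letters of `w`
differ, they are all comparable to `σ₁(A_w)`. For such a word put `g = A_w`, `N = σ₁(g)` and
`M = σ₁(g⁻¹)`, so that `σ₂/σ₁ = M/N²` and `σ₃/σ₁ = 1/(MN)`, and call `f_w(Δ̃)` the cylinder of `w`.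
The distance of `f_w(x)` and `f_w(y)` is controlled by `N⁻² ‖gx × gy‖`, and `gx × gy` is `x × y`
transformed by the adjugate of `g`; hence the cylinder has diameter `O(M/N²)`. A row of `g⁻¹` of
norm about `M` takes only values in `[0, O(1/N)]` on the cylinder, since it maps `g x / ω(g x)` to
`xₖ / ω(g x)`; hence the cylinder has width `O(1/(MN))` in some direction. Therefore one set of
diameter `O(σ₂/σ₁)`, or `O(σ₂/σ₃)` slices of diameter `O(σ₃/σ₁)`, cover the cylinder, at a total
`s`-dimensional cost `O(φ_s(A_w))` in both ranges of `s`.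

The cylinders of the constant words `b…b` shrink to the vertex `e_b`. So a point of the gasket that
lies in only finitely many cylinders of words with distinct last two letters is `f_u(e_b)` for some
word `u` and vertex `e_b`, and such points are countably many. By convergence of the series and
Borel–Cantelli, all the other points form a null set for the `s`-dimensional Hausdorff measure. The
bound by `s_A` follows by letting `s` decrease to `s_A`, or, if `s_A = 2`, because the gasket is
planar.
-/

open Matrix MeasureTheory

noncomputable section

abbrev M3 := Matrix (Fin 3) (Fin 3) ℝ
abbrev E3 := EuclideanSpace ℝ (Fin 3)

/-- The Rauzy generators. -/
def A : Fin 3 → M3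
  | 0 => !![1,1,1; 0,1,0; 0,0,1]
  | 1 => !![1,0,0; 1,1,1; 0,0,1]
  | 2 => !![1,0,0; 0,1,0; 1,1,1]

/-- Product of the matrices along a word. -/
def Aw (w : List (Fin 3)) : M3 := (w.map A).prod

/-- Euclidean norm of a vector in `ℝ³`. -/
def enorm3 (v : Fin 3 → ℝ) : ℝ := Real.sqrt (v 0 ^ 2 + v 1 ^ 2 + v 2 ^ 2)

/-- Largest singular value = `ℓ²` operator norm. -/
def sval1 (g : M3) : ℝ := ‖(Matrix.toEuclideanLin g).toContinuousLinearMap‖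

/-- Smallest singular value (for invertible `g`): `σ₃(g) = σ₁(g⁻¹)⁻¹`. -/
def sval3 (g : M3) : ℝ := (sval1 g⁻¹)⁻¹

/-- Middle singular value (for invertible `g`): `σ₂ = |det g|·σ₁(g⁻¹)/σ₁(g)`. -/
def sval2 (g : M3) : ℝ := |g.det| * sval1 g⁻¹ / sval1 g

def basis3 (i : Fin 3) : Fin 3 → ℝ := Pi.single i 1

def omega3 (v : Fin 3 → ℝ) : ℝ := v 0 + v 1 + v 2

def ofE : E3 → (Fin 3 → ℝ) := WithLp.equiv 2 (Fin 3 → ℝ)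
def toE : (Fin 3 → ℝ) → E3 := (WithLp.equiv 2 (Fin 3 → ℝ)).symm

/-- The standard 2-simplex in `ℝ³` (with the Euclidean metric). -/
def simplex : Set E3 := {x | (∀ i, 0 ≤ ofE x i) ∧ omega3 (ofE x) = 1}

/-- The projective action of the word `w` on the simplex. -/
def fmap (w : List (Fin 3)) (x : E3) : E3 :=
  toE ((omega3 ((Aw w) *ᵥ ofE x))⁻¹ • ((Aw w) *ᵥ ofE x))

/-- The Rauzy gasket. -/
def gasket : Set E3 :=
  ⋂ n : ℕ, ⋃ w ∈ {w : List (Fin 3) | w.length = n + 1}, fmap w '' simplex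

/-- Falconer's singular value function. -/
def phi (s : ℝ) (g : M3) : ℝ :=
  if s ≤ 1 then (sval2 g / sval1 g) ^ s
  else (sval2 g / sval1 g) * (sval3 g / sval1 g) ^ (s - 1)

/-- The affinity exponent of the Rauzy semigroup. -/
def sA : ℝ :=
  sSup {s : ℝ | s ∈ Set.Ioc (0:ℝ) 2 ∧
    ¬ Summable fun w : {w : List (Fin 3) // w ≠ []} => phi s (Aw w.1)}

/-- A word has its last `k` letters not all the same. -/
def LastNotAllSame (w : List (Fin 3)) (k : ℕ) : Prop :=
  k ≤ w.length ∧ ¬ ∃ c, ∀ x ∈ w.drop (w.length - k), x = c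

/-- A word's last two letters are different. -/
def LastTwoDiff (w : List (Fin 3)) : Prop :=
  ∃ u a b, w = u ++ [a, b] ∧ a ≠ b

/-- The Cartan projection `κ(g) = (log σ₁, log σ₂, log σ₃)`. -/
def kappa (g : M3) : Fin 3 → ℝ :=
  ![Real.log (sval1 g), Real.log (sval2 g), Real.log (sval3 g)]

/-- The linear functional `ψ_s` on the Cartan algebra. -/
def psi (s : ℝ) (lam : Fin 3 → ℝ) : ℝ := (lam 0 - lam 1) + (s - 1) * (lam 0 - lam 2)

end

open scoped ENNReal Topology

/-! ### Covers and Hausdorff measure -/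

section Covers

variable {X : Type*}

/-- `E` has a finite cover whose `s`-dimensional Hausdorff sum `∑ (diam tᵢ) ^ s` is at most `r`. -/
def HasFiniteCover [PseudoEMetricSpace X] (s : ℝ) (E : Set X) (r : ℝ≥0∞) : Prop :=
  ∃ (K : ℕ) (t : Fin K → Set X), E ⊆ ⋃ i, t i ∧ ∑ i, Metric.ediam (t i) ^ s ≤ r

theorem HasFiniteCover.mono [PseudoEMetricSpace X] {s : ℝ} {E : Set X} {r r' : ℝ≥0∞}
    (hE : HasFiniteCover s E r) (hr : r ≤ r') : HasFiniteCover s E r' :=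
  let ⟨K, t, hEt, hcost⟩ := hE
  ⟨K, t, hEt, hcost.trans hr⟩

theorem HasFiniteCover.of_forall_dist_le [PseudoMetricSpace X] {s δ : ℝ} (hs : 0 ≤ s) (hδ : 0 ≤ δ)
    {E : Set X} {K : ℕ} {t : Fin K → Set X} (hEt : E ⊆ ⋃ i, t i)
    (ht : ∀ i, ∀ x ∈ t i, ∀ y ∈ t i, dist x y ≤ δ) :
    HasFiniteCover s E (ENNReal.ofReal (K * δ ^ s)) := by
  refine ⟨K, t, hEt, ?_⟩
  calc ∑ i, Metric.ediam (t i) ^ s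
      ≤ ∑ _i : Fin K, ENNReal.ofReal δ ^ s := by
        gcongr with i
        exact Metric.ediam_le_of_forall_dist_le (ht i)
    _ = ENNReal.ofReal (K * δ ^ s) := by
        rw [Finset.sum_const, Finset.card_univ, Fintype.card_fin, nsmul_eq_mul,
          ENNReal.ofReal_mul K.cast_nonneg, ENNReal.ofReal_natCast,
          ENNReal.ofReal_rpow_of_nonneg hδ hs]

theorem HasFiniteCover.of_dist_le [PseudoMetricSpace X] {s δ : ℝ} (hs : 0 ≤ s) (hδ : 0 ≤ δ)
    {E : Set X} (hE : ∀ x ∈ E, ∀ y ∈ E, dist x y ≤ δ) :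
    HasFiniteCover s E (ENNReal.ofReal (δ ^ s)) := by
  simpa using HasFiniteCover.of_forall_dist_le (K := 1) (t := fun _ => E) hs hδ
    (Set.subset_iUnion (fun _ : Fin 1 => E) 0) fun _ => hE

theorem Icc_subset_iUnion_Icc_add_mul {h : ℝ} (hh : 0 < h) (p d : ℝ) :
    Set.Icc p (p + d) ⊆ ⋃ i : Fin (⌊d / h⌋₊ + 1), Set.Icc (p + i * h) (p + (i + 1) * h) := by
  rintro z ⟨hpz, hzd⟩
  have hz_nonneg : 0 ≤ (z - p) / h := div_nonneg (sub_nonneg.2 hpz) hh.le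
  have hz_le : (z - p) / h ≤ d / h := by gcongr; linarith
  refine Set.mem_iUnion.2 ⟨⟨⌊(z - p) / h⌋₊, Nat.lt_succ_of_le (Nat.floor_le_floor hz_le)⟩, ?_, ?_⟩
  · linarith [(le_div_iff₀ hh).1 (Nat.floor_le hz_nonneg)]
  · linarith [(div_lt_iff₀ hh).1 (Nat.lt_floor_add_one ((z - p) / h))]

theorem exists_fin_cover_of_lipschitzOnWith [PseudoMetricSpace X] {δ h : ℝ} (hh : 0 < h)
    (hhδ : h ≤ δ) {E : Set X} {f : X → ℝ} (hf : LipschitzOnWith 1 f E)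
    (hE : ∀ x ∈ E, ∀ y ∈ E, dist x y ≤ δ) :
    ∃ (K : ℕ) (t : Fin K → Set X), E ⊆ ⋃ i, t i ∧ (K : ℝ) ≤ 3 * (δ / h) ∧
      ∀ i, ∀ x ∈ t i, x ∈ E ∧ ∀ y ∈ t i, |f x - f y| ≤ h := by
  have hδ : 0 < δ := hh.trans_le hhδ
  rcases E.eq_empty_or_nonempty with rfl | ⟨x₀, hx₀⟩
  · exact ⟨0, fun _ => ∅, Set.empty_subset _, by rw [Nat.cast_zero]; positivity, fun i => i.elim0⟩
  let slice (i : Fin (⌊2 * δ / h⌋₊ + 1)) : Set ℝ :=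
    Set.Icc (f x₀ - δ + i * h) (f x₀ - δ + (i + 1) * h)
  refine ⟨_, fun i => E ∩ f ⁻¹' slice i, fun x hx => ?_, ?_, fun i x hx => ⟨hx.1, fun y hy => ?_⟩⟩
  · have hfx : |f x - f x₀| ≤ δ := by
      simpa [Real.dist_eq] using (hf.dist_le_mul x hx x₀ hx₀).trans (by simpa using hE x hx x₀ hx₀)
    obtain ⟨hl, hu⟩ := abs_le.1 hfx
    obtain ⟨i, hi⟩ := Set.mem_iUnion.1 (Icc_subset_iUnion_Icc_add_mul hh (f x₀ - δ) (2 * δ)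
      (show f x ∈ _ from ⟨by linarith, by linarith⟩))
    exact Set.mem_iUnion.2 ⟨i, hx, hi⟩
  · have hfloor : (⌊2 * δ / h⌋₊ : ℝ) ≤ 2 * δ / h := Nat.floor_le (by positivity)
    have hone : 1 ≤ δ / h := (one_le_div hh).2 hhδ
    push_cast
    linarith [mul_div_assoc 2 δ h]
  · obtain ⟨hx₁, hx₂⟩ := hx.2
    obtain ⟨hy₁, hy₂⟩ := hy.2
    exact abs_le.2 ⟨by linarith, by linarith⟩

-- `E` is cut into `O(δ / h)` slices of height `h` along `f`, each of diameter `O(h)`; if `δ ≤ h`,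
-- then `E` itself is the only slice.
theorem HasFiniteCover.of_thin [PseudoMetricSpace X] {s δ h c : ℝ} (hs : 1 ≤ s) (hδ : 0 ≤ δ)
    (hh : 0 < h) (hc : 1 ≤ c) {E : Set X} {f : X → ℝ} (hf : LipschitzOnWith 1 f E)
    (hE : ∀ x ∈ E, ∀ y ∈ E, dist x y ≤ δ)
    (hthin : ∀ x ∈ E, ∀ y ∈ E, dist x y ≤ c * (|f x - f y| + h)) :
    HasFiniteCover s E (ENNReal.ofReal (3 * (2 * c) ^ s * (δ * h ^ (s - 1)))) := by
  have hs₀ : 0 ≤ s := zero_le_one.trans hs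
  have hpow {t : ℝ} (ht : 0 ≤ t) : t ^ s = t * t ^ (s - 1) := by
    rw [← Real.rpow_one_add' ht (by linarith), add_sub_cancel]
  rcases le_total δ h with hδh | hhδ
  · refine (HasFiniteCover.of_dist_le hs₀ hδ hE).mono (ENNReal.ofReal_le_ofReal ?_)
    have hconst : 1 ≤ 3 * (2 * c) ^ s := by
      linarith [Real.one_le_rpow (show 1 ≤ 2 * c by linarith) hs₀]
    calc δ ^ s = 1 * (δ * δ ^ (s - 1)) := by rw [hpow hδ, one_mul]
      _ ≤ 3 * (2 * c) ^ s * (δ * h ^ (s - 1)) := by gcongr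
  · obtain ⟨K, t, hEt, hK, ht⟩ := exists_fin_cover_of_lipschitzOnWith hh hhδ hf hE
    have hdist (i) (x) (hx : x ∈ t i) (y) (hy : y ∈ t i) : dist x y ≤ 2 * c * h := by
      obtain ⟨hxE, hxt⟩ := ht i x hx
      calc dist x y ≤ c * (|f x - f y| + h) := hthin x hxE y (ht i y hy).1
        _ ≤ c * (h + h) := by gcongr; exact hxt y hy
        _ = 2 * c * h := by ring
    refine (HasFiniteCover.of_forall_dist_le hs₀ (by positivity) hEt hdist).mono
      (ENNReal.ofReal_le_ofReal ?_)
    calc K * (2 * c * h) ^ s ≤ 3 * (δ / h) * ((2 * c) ^ s * (h * h ^ (s - 1))) := by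
          rw [Real.mul_rpow (by positivity) hh.le, hpow hh.le]
          gcongr
      _ = 3 * (2 * c) ^ s * (δ * h ^ (s - 1)) := by field_simp

section HausdorffMeasure

variable [EMetricSpace X] [MeasurableSpace X] [BorelSpace X] {ι : Type*} [Countable ι] {s : ℝ}

theorem hausdorffMeasure_eq_zero_of_infinite_mem (hs : 0 < s) {t : ι → Set X}
    (ht : ∑' i, Metric.ediam (t i) ^ s ≠ ∞) {E : Set X} (hE : ∀ x ∈ E, {i | x ∈ t i}.Infinite) :
    μH[s] E = 0 := by
  have htail := ENNReal.tendsto_tsum_compl_atTop_zero ht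
  have hradius : Filter.Tendsto
      (fun F : Finset ι => (∑' i : {i // i ∉ F}, Metric.ediam (t i) ^ s) ^ s⁻¹)
      Filter.atTop (𝓝 0) := by
    simpa [hs] using htail.ennrpow_const s⁻¹
  refine le_antisymm ?_ zero_le
  rw [← htail.liminf_eq]
  refine Measure.hausdorffMeasure_le_liminf_tsum s E _ hradius
    (fun (F : Finset ι) (i : {i // i ∉ F}) => t i) (.of_forall fun F i => ?_)
    (.of_forall fun F x hx => ?_)
  · rw [ENNReal.le_rpow_inv_iff hs]
    exact ENNReal.le_tsum (f := fun i : {i // i ∉ F} => Metric.ediam (t i) ^ s) i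
  · obtain ⟨i, hi, hiF⟩ := (hE x hx).exists_notMem_finset F
    exact Set.mem_iUnion.2 ⟨⟨i, hiF⟩, hi⟩

theorem hausdorffMeasure_eq_zero_of_hasFiniteCover (hs : 0 < s) {U : ι → Set X} {r : ι → ℝ≥0∞}
    (hU : ∀ i, HasFiniteCover s (U i) (r i)) (hr : ∑' i, r i ≠ ∞) {E : Set X}
    (hE : ∀ x ∈ E, {i | x ∈ U i}.Infinite) : μH[s] E = 0 := by
  choose K t hUt hcost using hU
  refine hausdorffMeasure_eq_zero_of_infinite_mem hs (t := fun p : Σ i, Fin (K i) => t p.1 p.2)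
    (ne_top_of_le_ne_top hr ?_) fun x hx => .of_image Sigma.fst ((hE x hx).mono fun i hi => ?_)
  · rw [ENNReal.tsum_sigma']
    simpa only [tsum_fintype] using ENNReal.tsum_le_tsum hcost
  · obtain ⟨k, hk⟩ := Set.mem_iUnion.1 (hUt i hi)
    exact ⟨⟨i, k⟩, hk, rfl⟩

end HausdorffMeasure

theorem dimH_le_ofReal_of_hausdorffMeasure_diff_eq_zero [EMetricSpace X] [MeasurableSpace X]
    [BorelSpace X] {s : ℝ} (hs : 0 ≤ s) {E C : Set X} (hC : C.Countable)
    (hE : μH[s] (E \ C) = 0) : dimH E ≤ ENNReal.ofReal s := by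
  have hdiff : dimH (E \ C) ≤ ENNReal.ofReal s := by
    refine dimH_le_of_hausdorffMeasure_ne_top (d := s.toNNReal) ?_
    rw [Real.coe_toNNReal _ hs, hE]
    exact ENNReal.zero_ne_top
  calc dimH E ≤ dimH (E \ C ∪ C) := dimH_mono (Set.subset_sdiff_union E C)
    _ = max (dimH (E \ C)) (dimH C) := dimH_union _ _
    _ ≤ ENNReal.ofReal s := by rw [dimH_countable hC]; exact max_le hdiff zero_le

end Covers

theorem dimH_stdSimplex_le {ι : Type*} [Fintype ι] {n : ℕ} (hι : Fintype.card ι = n + 1) :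
    dimH (stdSimplex ℝ ι) ≤ n := by
  classical
  have : Nonempty ι := Fintype.card_pos_iff.1 (by omega)
  have hne : (stdSimplex ℝ ι).Nonempty := ⟨_, single_mem_stdSimplex ℝ (Classical.arbitrary ι)⟩
  rw [Real.Convex.dimH_eq_finrank_vectorSpan (convex_stdSimplex ℝ ι) hne,
    ← convexHull_rangle_single_eq_stdSimplex, ← direction_affineSpan,
    affineSpan_convexHull, direction_affineSpan]
  exact_mod_cast finrank_vectorSpan_range_le ℝ _ hι

theorem le_ofReal_sSup_of_forall_Ioc {P : ℝ → Prop} {b : ℝ} {d : ℝ≥0∞}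
    (hd : ∀ s ∈ Set.Ioc 0 b, P s → d ≤ ENNReal.ofReal s) (hb : d ≤ ENNReal.ofReal b) :
    d ≤ ENNReal.ofReal (sSup {s | s ∈ Set.Ioc 0 b ∧ ¬ P s}) := by
  set S := {s | s ∈ Set.Ioc 0 b ∧ ¬ P s}
  have hS : 0 ≤ sSup S := Real.sSup_nonneg fun s hs => hs.1.1.le
  rcases le_or_gt b (sSup S) with hbS | hSb
  · exact hb.trans (ENNReal.ofReal_le_ofReal hbS)
  · refine ge_of_tendsto (ENNReal.continuous_ofReal.continuousWithinAt (s := Set.Ioi (sSup S))) ?_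
    filter_upwards [Ioo_mem_nhdsGT hSb] with s hs
    have hsb : s ∈ Set.Ioc 0 b := ⟨hS.trans_lt hs.1, hs.2.le⟩
    have hsS : s ∉ S := notMem_of_csSup_lt hs.1 ⟨b, fun r hr => hr.1.2⟩
    exact hd s hsb (not_not.1 fun hP => hsS ⟨hsb, hP⟩)

/-! ### Cross products in the sup norm -/

theorem mulVec_cross_mulVec {R : Type*} [CommRing R] (g : Matrix (Fin 3) (Fin 3) R)
    (u v : Fin 3 → R) :
    (g *ᵥ u) ⨯₃ (g *ᵥ v) = (u ⨯₃ v) ᵥ* g.adjugate := by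
  simp only [cross_apply, adjugate_fin_three, mulVec, dotProduct, Fin.sum_univ_three]
  ext i
  fin_cases i <;> simp <;> ring

theorem norm_cross_le (u v : Fin 3 → ℝ) : ‖u ⨯₃ v‖ ≤ 2 * (‖u‖ * ‖v‖) := by
  have hterm (i j k l : Fin 3) : |u i * v j - u k * v l| ≤ 2 * (‖u‖ * ‖v‖) := by
    have hprod (i j : Fin 3) : |u i * v j| ≤ ‖u‖ * ‖v‖ := by
      rw [abs_mul]
      exact mul_le_mul (norm_le_pi_norm u i) (norm_le_pi_norm v j) (abs_nonneg _) (norm_nonneg _)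
    linarith [abs_sub (u i * v j) (u k * v l), hprod i j, hprod k l]
  refine (pi_norm_le_iff_of_nonneg (by positivity)).2 fun i => ?_
  rw [cross_apply]
  fin_cases i <;> exact hterm _ _ _ _

theorem abs_mul_sub_mul_le_norm_cross (u v : Fin 3 → ℝ) (i j : Fin 3) :
    |u i * v j - u j * v i| ≤ ‖u ⨯₃ v‖ := by
  have h (k : Fin 3) : |(u ⨯₃ v) k| ≤ ‖u ⨯₃ v‖ := norm_le_pi_norm (u ⨯₃ v) k
  have h₀ : |u 1 * v 2 - u 2 * v 1| ≤ ‖u ⨯₃ v‖ := h 0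
  have h₁ : |u 2 * v 0 - u 0 * v 2| ≤ ‖u ⨯₃ v‖ := h 1
  have h₂ : |u 0 * v 1 - u 1 * v 0| ≤ ‖u ⨯₃ v‖ := h 2
  rcases eq_or_ne i j with rfl | hij
  · simp only [sub_self, abs_zero, norm_nonneg]
  · fin_cases i <;> fin_cases j <;> first
      | exact absurd rfl hij
      | assumption
      | exact (abs_sub_comm _ _).trans_le ‹_›

theorem exists_norm_mul_norm_le (u : Fin 3 → ℝ) :
    ∃ i, ∀ v : Fin 3 → ℝ, ‖u‖ * ‖v‖ ≤ ‖u‖ * |v i| + ‖u ⨯₃ v‖ := by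
  obtain ⟨i, hi⟩ := Finite.exists_max fun i => |u i|
  have hu : ‖u‖ = |u i| := le_antisymm ((pi_norm_le_iff_of_nonneg (abs_nonneg _)).2 hi)
    (norm_le_pi_norm u i)
  refine ⟨i, fun v => ?_⟩
  obtain ⟨j, hj⟩ := Finite.exists_max fun j => |v j|
  have hv : ‖v‖ ≤ |v j| := (pi_norm_le_iff_of_nonneg (abs_nonneg _)).2 hj
  calc ‖u‖ * ‖v‖ ≤ |u i * v j| := by rw [hu, abs_mul]; gcongr
    _ ≤ |u j * v i| + |u i * v j - u j * v i| := by
        linarith [abs_sub_abs_le_abs_sub (u i * v j) (u j * v i)]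
    _ ≤ ‖u‖ * |v i| + ‖u ⨯₃ v‖ := by
        rw [abs_mul (u j)]
        gcongr
        · exact norm_le_pi_norm u j
        · exact abs_mul_sub_mul_le_norm_cross u v i j

/-! ### Singular values and matrix entries -/

theorem norm_le_sum_abs {ι : Type*} [Fintype ι] (x : EuclideanSpace ℝ ι) :
    ‖x‖ ≤ ∑ i, |x i| := by
  rw [EuclideanSpace.norm_eq]
  exact Real.sqrt_le_iff.2 ⟨Finset.sum_nonneg fun i _ => abs_nonneg (x i),
    Finset.sum_sq_le_sq_sum_of_nonneg fun i _ => abs_nonneg (x i)⟩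

theorem abs_apply_le_sval1 (g : M3) (i j : Fin 3) : |g i j| ≤ sval1 g := by
  let T := (toEuclideanLin g).toContinuousLinearMap
  calc |g i j| = ‖T (EuclideanSpace.single j 1) i‖ := by simp [T, toLpLin_apply]
    _ ≤ ‖T (EuclideanSpace.single j 1)‖ := PiLp.norm_apply_le _ i
    _ ≤ sval1 g := T.unit_le_opNorm _ (by simp)

theorem sval1_le_sum_abs (g : M3) : sval1 g ≤ ∑ p : Fin 3 × Fin 3, |g p.1 p.2| := by
  let T := (toEuclideanLin g).toContinuousLinearMap
  refine T.opNorm_le_bound (by positivity) fun x => ?_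
  calc ‖T x‖ ≤ ∑ i, |T x i| := norm_le_sum_abs _
    _ ≤ ∑ i, ∑ j, |g i j| * ‖x‖ := by
        gcongr with i
        refine (Finset.abs_sum_le_sum_abs (fun j => g i j * x j) Finset.univ).trans ?_
        gcongr with j
        rw [abs_mul]
        gcongr
        exact PiLp.norm_apply_le x j
    _ = (∑ p : Fin 3 × Fin 3, |g p.1 p.2|) * ‖x‖ := by
        rw [Fintype.sum_prod_type, Finset.sum_mul]
        simp only [Finset.sum_mul]

theorem exists_sval1_le_nine_mul_abs (g : M3) : ∃ i j, sval1 g ≤ 9 * |g i j| := by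
  obtain ⟨p, hp⟩ := Finite.exists_max fun p : Fin 3 × Fin 3 => |g p.1 p.2|
  refine ⟨p.1, p.2, (sval1_le_sum_abs g).trans ?_⟩
  calc ∑ q : Fin 3 × Fin 3, |g q.1 q.2| ≤ ∑ _q : Fin 3 × Fin 3, |g p.1 p.2| :=
        Finset.sum_le_sum fun q _ => hp q
    _ = 9 * |g p.1 p.2| := by simp

theorem sval1_pos_of_ne_zero {g : M3} (hg : g ≠ 0) : 0 < sval1 g := by
  obtain ⟨i, j, hij⟩ : ∃ i j, g i j ≠ 0 := by simpa [← Matrix.ext_iff] using hg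
  exact (abs_pos.2 hij).trans_le (abs_apply_le_sval1 g i j)

theorem norm_vecMul_le (v : Fin 3 → ℝ) (g : M3) : ‖v ᵥ* g‖ ≤ 3 * (‖v‖ * sval1 g) := by
  have hg : 0 ≤ sval1 g := (abs_nonneg _).trans (abs_apply_le_sval1 g 0 0)
  refine (pi_norm_le_iff_of_nonneg (by positivity)).2 fun j => ?_
  calc ‖(v ᵥ* g) j‖ ≤ ∑ i, |v i * g i j| :=
        Finset.abs_sum_le_sum_abs (fun i => v i * g i j) Finset.univ
    _ ≤ ∑ _i : Fin 3, ‖v‖ * sval1 g := by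
        gcongr with i
        rw [abs_mul]
        exact mul_le_mul (norm_le_pi_norm v i) (abs_apply_le_sval1 g i j) (abs_nonneg _)
          (norm_nonneg _)
    _ = 3 * (‖v‖ * sval1 g) := by simp

/-! ### The simplex and the radial projection -/

theorem omega3_eq_one_dotProduct (v : Fin 3 → ℝ) : omega3 v = 1 ⬝ᵥ v := by
  simp only [omega3, one_dotProduct, Fin.sum_univ_three]

theorem omega3_mulVec (g : M3) (x : Fin 3 → ℝ) : omega3 (g *ᵥ x) = (1 ᵥ* g) ⬝ᵥ x := by
  rw [omega3_eq_one_dotProduct, dotProduct_mulVec]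

theorem omega3_smul (r : ℝ) (v : Fin 3 → ℝ) : omega3 (r • v) = r * omega3 v := by
  rw [omega3_eq_one_dotProduct, omega3_eq_one_dotProduct, dotProduct_smul, smul_eq_mul]

theorem mem_simplex_iff {x : E3} : x ∈ simplex ↔ ofE x ∈ stdSimplex ℝ (Fin 3) := by
  change _ ∧ omega3 _ = 1 ↔ _ ∧ ∑ i, _ = 1
  rw [omega3, Fin.sum_univ_three]

theorem omega3_eq_one_of_mem_stdSimplex {x : Fin 3 → ℝ} (hx : x ∈ stdSimplex ℝ (Fin 3)) :
    omega3 x = 1 := by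
  rw [omega3_eq_one_dotProduct, one_dotProduct, hx.2]

theorem le_dotProduct_of_mem_stdSimplex {ι : Type*} [Fintype ι] {a : ℝ} {c x : ι → ℝ}
    (hc : ∀ i, a ≤ c i) (hx : x ∈ stdSimplex ℝ ι) : a ≤ c ⬝ᵥ x :=
  calc a = ∑ i, a * x i := by rw [← Finset.mul_sum, hx.2, mul_one]
    _ ≤ c ⬝ᵥ x := Finset.sum_le_sum fun i _ => mul_le_mul_of_nonneg_right (hc i) (hx.1 i)

theorem norm_le_one_of_mem_stdSimplex {ι : Type*} [Fintype ι] {x : ι → ℝ}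
    (hx : x ∈ stdSimplex ℝ ι) : ‖x‖ ≤ 1 :=
  (pi_norm_le_iff_of_nonneg zero_le_one).2 fun i => by
    rw [Real.norm_of_nonneg (hx.1 i)]
    exact (mem_Icc_of_mem_stdSimplex hx i).2

/-- The central projection `X ↦ X / ω(X)` onto the plane `ω = 1`; it is `0` when `ω(X) = 0`. -/
noncomputable def radialProj (X : Fin 3 → ℝ) : Fin 3 → ℝ := (omega3 X)⁻¹ • X

theorem omega3_radialProj {X : Fin 3 → ℝ} (hX : omega3 X ≠ 0) : omega3 (radialProj X) = 1 := by
  rw [radialProj, omega3_smul, inv_mul_cancel₀ hX]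

theorem radialProj_mem_stdSimplex {X : Fin 3 → ℝ} (hX : ∀ i, 0 ≤ X i) (hω : 0 < omega3 X) :
    radialProj X ∈ stdSimplex ℝ (Fin 3) := by
  refine ⟨fun i => mul_nonneg (inv_nonneg.2 hω.le) (hX i), ?_⟩
  rw [← one_dotProduct, ← omega3_eq_one_dotProduct, omega3_radialProj hω.ne']

theorem radialProj_smul {r : ℝ} (hr : r ≠ 0) (X : Fin 3 → ℝ) :
    radialProj (r • X) = radialProj X := by
  rw [radialProj, omega3_smul, smul_smul, mul_inv, mul_right_comm, inv_mul_cancel₀ hr, one_mul,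
    radialProj]

theorem radialProj_sub_radialProj {X Y : Fin 3 → ℝ} (hX : omega3 X ≠ 0) (hY : omega3 Y ≠ 0) :
    radialProj X - radialProj Y = (omega3 X * omega3 Y)⁻¹ • (1 ⨯₃ (X ⨯₃ Y)) := by
  rw [cross_cross_eq_smul_sub_smul', dotProduct_comm X 1, ← omega3_eq_one_dotProduct,
    ← omega3_eq_one_dotProduct, smul_sub, smul_smul, smul_smul, radialProj, radialProj]
  congr 2 <;> field_simp

theorem norm_radialProj_sub_radialProj_le {X Y : Fin 3 → ℝ} (hX : 0 < omega3 X)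
    (hY : 0 < omega3 Y) :
    ‖radialProj X - radialProj Y‖ ≤ 2 * ((omega3 X)⁻¹ * (omega3 Y)⁻¹ * ‖X ⨯₃ Y‖) := by
  rw [radialProj_sub_radialProj hX.ne' hY.ne', norm_smul, norm_inv, ← mul_inv,
    Real.norm_of_nonneg (mul_pos hX hY).le]
  have hcross : ‖(1 : Fin 3 → ℝ) ⨯₃ (X ⨯₃ Y)‖ ≤ 2 * ‖X ⨯₃ Y‖ := by
    simpa using norm_cross_le 1 (X ⨯₃ Y)
  calc (omega3 X * omega3 Y)⁻¹ * ‖(1 : Fin 3 → ℝ) ⨯₃ (X ⨯₃ Y)‖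
      ≤ (omega3 X * omega3 Y)⁻¹ * (2 * ‖X ⨯₃ Y‖) := by gcongr
    _ = 2 * ((omega3 X * omega3 Y)⁻¹ * ‖X ⨯₃ Y‖) := by ring

-- The functional `c` vanishes on `p`, so `(1 ⨯ c) ⨯ p = c`: the kernel line of `c` in the plane
-- `ω = 0`, directed by `1 ⨯ c`, is about as long as `c`.
theorem norm_le_two_mul_norm_one_cross {c p : Fin 3 → ℝ} (hp : p ∈ stdSimplex ℝ (Fin 3))
    (hcp : c ⬝ᵥ p = 0) : ‖c‖ ≤ 2 * ‖(1 : Fin 3 → ℝ) ⨯₃ c‖ := by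
  have hc : (1 : Fin 3 → ℝ) ⨯₃ c ⨯₃ p = c := by
    rw [cross_cross_eq_smul_sub_smul, hcp, ← omega3_eq_one_dotProduct,
      omega3_eq_one_of_mem_stdSimplex hp, one_smul, zero_smul, sub_zero]
  calc ‖c‖ = ‖(1 : Fin 3 → ℝ) ⨯₃ c ⨯₃ p‖ := by rw [hc]
    _ ≤ 2 * (‖(1 : Fin 3 → ℝ) ⨯₃ c‖ * ‖p‖) := norm_cross_le _ _
    _ ≤ 2 * (‖(1 : Fin 3 → ℝ) ⨯₃ c‖ * 1) := by
        gcongr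
        exact norm_le_one_of_mem_stdSimplex hp
    _ = 2 * ‖(1 : Fin 3 → ℝ) ⨯₃ c‖ := by rw [mul_one]

theorem exists_norm_le_abs_apply_add {c p : Fin 3 → ℝ} (hp : p ∈ stdSimplex ℝ (Fin 3))
    (hcp : c ⬝ᵥ p = 0) (hc : c ≠ 0) :
    ∃ i, ∀ v, omega3 v = 0 → ‖v‖ ≤ |v i| + 2 * |c ⬝ᵥ v| / ‖c‖ := by
  have hcd := norm_le_two_mul_norm_one_cross hp hcp
  have hc₀ : 0 < ‖c‖ := norm_pos_iff.2 hc
  obtain ⟨i, hi⟩ := exists_norm_mul_norm_le ((1 : Fin 3 → ℝ) ⨯₃ c)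
  set d := ‖(1 : Fin 3 → ℝ) ⨯₃ c‖
  have hd : 0 < d := by linarith
  refine ⟨i, fun v hv => ?_⟩
  have hdv : ‖(1 : Fin 3 → ℝ) ⨯₃ c ⨯₃ v‖ = |c ⬝ᵥ v| := by
    rw [cross_cross_eq_smul_sub_smul, ← omega3_eq_one_dotProduct, hv, zero_smul, zero_sub,
      norm_neg, norm_smul, norm_one, mul_one, Real.norm_eq_abs]
  calc ‖v‖ ≤ |v i| + |c ⬝ᵥ v| / d := by
        rw [← mul_le_mul_iff_right₀ hd, mul_add, mul_div_cancel₀ _ hd.ne', ← hdv]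
        exact hi v
    _ ≤ |v i| + |c ⬝ᵥ v| / (‖c‖ / 2) := by gcongr; linarith
    _ = |v i| + 2 * |c ⬝ᵥ v| / ‖c‖ := by rw [div_div_eq_mul_div, mul_comm]

/-! ### Projective action of balanced matrices -/

/-- The projective action of `g` on the plane `ω = 1`; the maps `fmap w` are the case `g = Aw w`. -/
noncomputable def projMap (g : M3) (x : E3) : E3 := toE (radialProj (g *ᵥ ofE x))

theorem fmap_eq_projMap (w : List (Fin 3)) : fmap w = projMap (Aw w) := rfl

theorem ofE_projMap (g : M3) (x : E3) : ofE (projMap g x) = radialProj (g *ᵥ ofE x) := rfl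

theorem projMap_mul (g : M3) {h : M3} {x : E3} (hx : omega3 (h *ᵥ ofE x) ≠ 0) :
    projMap (g * h) x = projMap g (projMap h x) := by
  rw [projMap, projMap, ofE_projMap, radialProj.eq_1 (h *ᵥ ofE x), mulVec_smul,
    radialProj_smul (inv_ne_zero hx), mulVec_mulVec]

theorem continuousAt_projMap {g : M3} {x : E3} (hx : omega3 (g *ᵥ ofE x) ≠ 0) :
    ContinuousAt (projMap g) x := by
  have hg : Continuous fun y : E3 => g *ᵥ ofE y :=
    continuous_const.matrix_mulVec (PiLp.continuous_ofLp 2 _)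
  have hω : Continuous fun y : E3 => omega3 (g *ᵥ ofE y) := by
    unfold omega3
    fun_prop
  exact (PiLp.continuous_toLp 2 _).continuousAt.comp
    ((hω.continuousAt.inv₀ hx).smul hg.continuousAt)

theorem dist_le_three_mul_norm (x y : E3) : dist x y ≤ 3 * ‖ofE x - ofE y‖ :=
  calc dist x y ≤ ∑ i, |(ofE x - ofE y) i| := by
        rw [dist_eq_norm]
        exact norm_le_sum_abs (x - y)
    _ ≤ ∑ _i : Fin 3, ‖ofE x - ofE y‖ :=
        Finset.sum_le_sum fun i _ => norm_le_pi_norm (ofE x - ofE y) i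
    _ = 3 * ‖ofE x - ofE y‖ := by simp

theorem lipschitzWith_ofE_apply (i : Fin 3) : LipschitzWith 1 fun x : E3 => ofE x i :=
  LipschitzWith.of_dist_le_mul fun x y => by
    rw [NNReal.coe_one, one_mul, dist_eq_norm x y]
    exact PiLp.norm_apply_le (x - y) i

theorem norm_mulVec_cross_mulVec_le {g : M3} (hg : g.det ≠ 0) (u v : Fin 3 → ℝ) :
    ‖(g *ᵥ u) ⨯₃ (g *ᵥ v)‖ ≤ 6 * (‖u‖ * ‖v‖ * (|g.det| * sval1 g⁻¹)) := by
  have hadj : g.adjugate = g.det • g⁻¹ := by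
    rw [inv_def, smul_smul, Ring.mul_inverse_cancel _ hg.isUnit, one_smul]
  have hM : 0 ≤ sval1 g⁻¹ := norm_nonneg _
  calc ‖(g *ᵥ u) ⨯₃ (g *ᵥ v)‖ = |g.det| * ‖(u ⨯₃ v) ᵥ* g⁻¹‖ := by
        rw [mulVec_cross_mulVec, hadj, vecMul_smul, norm_smul, Real.norm_eq_abs]
    _ ≤ |g.det| * (3 * (2 * (‖u‖ * ‖v‖) * sval1 g⁻¹)) := by
        gcongr
        exact (norm_vecMul_le _ _).trans (by gcongr; exact norm_cross_le u v)
    _ = 6 * (‖u‖ * ‖v‖ * (|g.det| * sval1 g⁻¹)) := by ring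

/-- A nonnegative invertible matrix whose column sums `1 ᵥ* g` are all comparable to its norm, with
constant `κ`: such a `g` acts on the simplex with bounded projective distortion. -/
structure IsBalanced (κ : ℝ) (g : M3) : Prop where
  nonneg : ∀ i j, 0 ≤ g i j
  det_ne_zero : g.det ≠ 0
  sval1_le : ∀ j, sval1 g ≤ κ * (1 ᵥ* g) j

namespace IsBalanced

variable {κ : ℝ} {g : M3} {x y : Fin 3 → ℝ}

theorem sval1_pos (hg : IsBalanced κ g) : 0 < sval1 g :=
  sval1_pos_of_ne_zero fun h => hg.det_ne_zero (by simp [h])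

theorem sval1_inv_pos (hg : IsBalanced κ g) : 0 < sval1 g⁻¹ :=
  sval1_pos_of_ne_zero fun h => by
    simpa [h] using (isUnit_nonsing_inv_det g hg.det_ne_zero.isUnit).ne_zero

theorem sval2_div_sval1_nonneg (hg : IsBalanced κ g) : 0 ≤ sval2 g / sval1 g :=
  div_nonneg (div_nonneg (mul_nonneg (abs_nonneg _) hg.sval1_inv_pos.le) hg.sval1_pos.le)
    hg.sval1_pos.le

theorem const_pos (hg : IsBalanced κ g) : 0 < κ := by
  have hcol : 0 ≤ (1 ᵥ* g) 0 :=
    dotProduct_nonneg_of_nonneg (zero_le_one (α := Fin 3 → ℝ)) fun i => hg.nonneg i 0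
  exact pos_of_mul_pos_left (hg.sval1_pos.trans_le (hg.sval1_le 0)) hcol

theorem sval1_le_mul_omega3 (hg : IsBalanced κ g) (hx : x ∈ stdSimplex ℝ (Fin 3)) :
    sval1 g ≤ κ * omega3 (g *ᵥ x) := by
  rw [omega3_mulVec, ← smul_eq_mul, ← smul_dotProduct]
  exact le_dotProduct_of_mem_stdSimplex hg.sval1_le hx

theorem omega3_pos (hg : IsBalanced κ g) (hx : x ∈ stdSimplex ℝ (Fin 3)) : 0 < omega3 (g *ᵥ x) :=
  pos_of_mul_pos_right (hg.sval1_pos.trans_le (hg.sval1_le_mul_omega3 hx)) hg.const_pos.le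

theorem inv_omega3_le (hg : IsBalanced κ g) (hx : x ∈ stdSimplex ℝ (Fin 3)) :
    (omega3 (g *ᵥ x))⁻¹ ≤ κ / sval1 g := by
  rw [le_div_iff₀ hg.sval1_pos, inv_mul_le_iff₀ (hg.omega3_pos hx), mul_comm]
  exact hg.sval1_le_mul_omega3 hx

theorem radialProj_mem (hg : IsBalanced κ g) (hx : x ∈ stdSimplex ℝ (Fin 3)) :
    radialProj (g *ᵥ x) ∈ stdSimplex ℝ (Fin 3) :=
  radialProj_mem_stdSimplex
    (fun i => dotProduct_nonneg_of_nonneg (hg.nonneg i) hx.1) (hg.omega3_pos hx)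

theorem norm_radialProj_sub_le (hg : IsBalanced κ g) (hx : x ∈ stdSimplex ℝ (Fin 3))
    (hy : y ∈ stdSimplex ℝ (Fin 3)) :
    ‖radialProj (g *ᵥ x) - radialProj (g *ᵥ y)‖ ≤ 12 * κ ^ 2 * (sval2 g / sval1 g) := by
  have hM : 0 ≤ sval1 g⁻¹ := norm_nonneg _
  have hκ := hg.const_pos
  have hN := hg.sval1_pos
  have hωx := hg.omega3_pos hx
  have hωy := hg.omega3_pos hy
  have hcross : ‖(g *ᵥ x) ⨯₃ (g *ᵥ y)‖ ≤ 6 * (|g.det| * sval1 g⁻¹) :=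
    calc ‖(g *ᵥ x) ⨯₃ (g *ᵥ y)‖ ≤ 6 * (‖x‖ * ‖y‖ * (|g.det| * sval1 g⁻¹)) :=
          norm_mulVec_cross_mulVec_le hg.det_ne_zero x y
      _ ≤ 6 * (1 * 1 * (|g.det| * sval1 g⁻¹)) := by
          gcongr
          exacts [norm_le_one_of_mem_stdSimplex hx, norm_le_one_of_mem_stdSimplex hy]
      _ = 6 * (|g.det| * sval1 g⁻¹) := by ring
  calc ‖radialProj (g *ᵥ x) - radialProj (g *ᵥ y)‖
      ≤ 2 * ((omega3 (g *ᵥ x))⁻¹ * (omega3 (g *ᵥ y))⁻¹ * ‖(g *ᵥ x) ⨯₃ (g *ᵥ y)‖) :=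
        norm_radialProj_sub_radialProj_le hωx hωy
    _ ≤ 2 * (κ / sval1 g * (κ / sval1 g) * (6 * (|g.det| * sval1 g⁻¹))) := by
        gcongr
        exacts [hg.inv_omega3_le hx, hg.inv_omega3_le hy]
    _ = 12 * κ ^ 2 * (sval2 g / sval1 g) := by rw [sval2]; field_simp; ring

theorem inv_row_dotProduct_radialProj (hg : IsBalanced κ g) (k : Fin 3) (x : Fin 3 → ℝ) :
    g⁻¹ k ⬝ᵥ radialProj (g *ᵥ x) = (omega3 (g *ᵥ x))⁻¹ * x k := by
  have hinv : g⁻¹ *ᵥ (g *ᵥ x) = x := by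
    rw [mulVec_mulVec, nonsing_inv_mul g hg.det_ne_zero.isUnit, one_mulVec]
  rw [radialProj, dotProduct_smul, smul_eq_mul]
  exact congrArg _ (congrFun hinv k)

theorem inv_row_dotProduct_radialProj_mem_Icc (hg : IsBalanced κ g) (k : Fin 3)
    (hx : x ∈ stdSimplex ℝ (Fin 3)) :
    g⁻¹ k ⬝ᵥ radialProj (g *ᵥ x) ∈ Set.Icc 0 (κ / sval1 g) := by
  obtain ⟨hxk, hxk'⟩ := mem_Icc_of_mem_stdSimplex hx k
  have hω := hg.omega3_pos hx
  rw [hg.inv_row_dotProduct_radialProj]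
  exact ⟨by positivity, (mul_le_of_le_one_right (by positivity) hxk').trans (hg.inv_omega3_le hx)⟩

-- A row `c = g⁻¹ k` of maximal norm reads off the `k`-th coordinate upstairs, divided by the large
-- quantity `ω (g x)`: it is nearly constant on the image of the simplex, and it vanishes at the
-- image of a vertex.
theorem exists_norm_radialProj_sub_le (hg : IsBalanced κ g) :
    ∃ i, ∀ x ∈ stdSimplex ℝ (Fin 3), ∀ y ∈ stdSimplex ℝ (Fin 3),
      ‖radialProj (g *ᵥ x) - radialProj (g *ᵥ y)‖ ≤
        |radialProj (g *ᵥ x) i - radialProj (g *ᵥ y) i| + 18 * κ * (sval3 g / sval1 g) := by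
  have hκ := hg.const_pos
  have hN := hg.sval1_pos
  have hM := hg.sval1_inv_pos
  obtain ⟨k, m, hkm⟩ := exists_sval1_le_nine_mul_abs g⁻¹
  set c := g⁻¹ k
  have hc : sval1 g⁻¹ / 9 ≤ ‖c‖ := by linarith [norm_le_pi_norm c m, Real.norm_eq_abs (c m)]
  obtain ⟨j, hjk⟩ := exists_ne k
  obtain ⟨i, hi⟩ := exists_norm_le_abs_apply_add
    (hg.radialProj_mem (single_mem_stdSimplex ℝ j))
    (show c ⬝ᵥ _ = 0 by
      rw [hg.inv_row_dotProduct_radialProj, Pi.single_eq_of_ne hjk.symm, mul_zero])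
    (norm_pos_iff.1 ((by positivity : 0 < sval1 g⁻¹ / 9).trans_le hc))
  refine ⟨i, fun x hx y hy => ?_⟩
  set v := radialProj (g *ᵥ x) - radialProj (g *ᵥ y)
  have hv : omega3 v = 0 := by
    rw [omega3_eq_one_dotProduct, dotProduct_sub, ← omega3_eq_one_dotProduct,
      ← omega3_eq_one_dotProduct, omega3_radialProj (hg.omega3_pos hx).ne',
      omega3_radialProj (hg.omega3_pos hy).ne', sub_self]
  have hcv : |c ⬝ᵥ v| ≤ κ / sval1 g := by
    obtain ⟨hcx, hcx'⟩ := hg.inv_row_dotProduct_radialProj_mem_Icc k hx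
    obtain ⟨hcy, hcy'⟩ := hg.inv_row_dotProduct_radialProj_mem_Icc k hy
    rw [dotProduct_sub]
    exact abs_sub_le_of_nonneg_of_le hcx hcx' hcy hcy'
  calc ‖v‖ ≤ |v i| + 2 * |c ⬝ᵥ v| / ‖c‖ := hi v hv
    _ ≤ |v i| + 2 * (κ / sval1 g) / (sval1 g⁻¹ / 9) := by gcongr
    _ = |v i| + 18 * κ * (sval3 g / sval1 g) := by rw [sval3]; field_simp; ring

theorem dist_projMap_le (hg : IsBalanced κ g) :
    ∀ x ∈ projMap g '' simplex, ∀ y ∈ projMap g '' simplex,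
      dist x y ≤ 36 * κ ^ 2 * (sval2 g / sval1 g) := by
  rintro _ ⟨x, hx, rfl⟩ _ ⟨y, hy, rfl⟩
  have h := hg.norm_radialProj_sub_le (mem_simplex_iff.1 hx) (mem_simplex_iff.1 hy)
  rw [← ofE_projMap, ← ofE_projMap] at h
  linarith [dist_le_three_mul_norm (projMap g x) (projMap g y)]

theorem exists_dist_projMap_le (hg : IsBalanced κ g) :
    ∃ i, ∀ x ∈ projMap g '' simplex, ∀ y ∈ projMap g '' simplex,
      dist x y ≤ 3 * (|ofE x i - ofE y i| + 18 * κ * (sval3 g / sval1 g)) := by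
  obtain ⟨i, hi⟩ := hg.exists_norm_radialProj_sub_le
  refine ⟨i, ?_⟩
  rintro _ ⟨x, hx, rfl⟩ _ ⟨y, hy, rfl⟩
  refine (dist_le_three_mul_norm _ _).trans ?_
  gcongr
  exact hi _ (mem_simplex_iff.1 hx) _ (mem_simplex_iff.1 hy)

theorem hasFiniteCover_of_le_one {s : ℝ} (hg : IsBalanced κ g) (hs : 0 ≤ s) (hs₁ : s ≤ 1) :
    HasFiniteCover s (projMap g '' simplex) (ENNReal.ofReal ((36 * κ ^ 2) ^ s * phi s g)) := by
  have hσ : 0 ≤ sval2 g / sval1 g := hg.sval2_div_sval1_nonneg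
  rw [phi, if_pos hs₁, ← Real.mul_rpow (by positivity) hσ]
  exact .of_dist_le hs (by positivity) hg.dist_projMap_le

theorem hasFiniteCover_of_one_lt {s : ℝ} (hg : IsBalanced κ g) (hs : 1 < s) :
    HasFiniteCover s (projMap g '' simplex)
      (ENNReal.ofReal (3 * (2 * 3) ^ s * (36 * κ ^ 2 * (18 * κ) ^ (s - 1)) * phi s g)) := by
  have hκ := hg.const_pos
  have hσ₂ : 0 ≤ sval2 g / sval1 g := hg.sval2_div_sval1_nonneg
  have hσ₃ : 0 < sval3 g / sval1 g := div_pos (inv_pos.2 hg.sval1_inv_pos) hg.sval1_pos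
  obtain ⟨i, hi⟩ := hg.exists_dist_projMap_le
  refine (HasFiniteCover.of_thin (c := 3) hs.le (by positivity) (by positivity) (by norm_num)
    (lipschitzWith_ofE_apply i).lipschitzOnWith hg.dist_projMap_le hi).mono
    (ENNReal.ofReal_le_ofReal (le_of_eq ?_))
  rw [phi, if_neg hs.not_ge, Real.mul_rpow (by positivity) hσ₃.le]
  ring

end IsBalanced

theorem exists_forall_isBalanced_hasFiniteCover (κ : ℝ) {s : ℝ} (hs : 0 ≤ s) :
    ∃ C, ∀ g, IsBalanced κ g →
      HasFiniteCover s (projMap g '' simplex) (ENNReal.ofReal (C * phi s g)) := by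
  rcases le_or_gt s 1 with hs₁ | hs₁
  · exact ⟨_, fun g hg => hg.hasFiniteCover_of_le_one hs hs₁⟩
  · exact ⟨_, fun g hg => hg.hasFiniteCover_of_one_lt hs₁⟩

/-! ### Words in the Rauzy generators -/

theorem Aw_append (u v : List (Fin 3)) : Aw (u ++ v) = Aw u * Aw v := by
  simp only [Aw, List.map_append, List.prod_append]

theorem Aw_nil : Aw [] = 1 := rfl

theorem Aw_cons (a : Fin 3) (w : List (Fin 3)) : Aw (a :: w) = A a * Aw w := by
  simp only [Aw, List.map_cons, List.prod_cons]

theorem A_nonneg (a i j : Fin 3) : 0 ≤ A a i j := by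
  fin_cases a <;> fin_cases i <;> fin_cases j <;> simp [A]

theorem Aw_nonneg (w : List (Fin 3)) : ∀ i j, 0 ≤ Aw w i j := by
  induction w with
  | nil => exact fun i j => by rw [Aw_nil, one_apply]; split_ifs <;> norm_num
  | cons a w ih =>
    rw [Aw_cons]
    exact fun i j => dotProduct_nonneg_of_nonneg (A_nonneg a i) fun k => ih k j

theorem det_Aw (w : List (Fin 3)) : (Aw w).det = 1 := by
  induction w with
  | nil => exact det_one
  | cons a w ih =>
    rw [Aw_cons, det_mul, ih, mul_one]
    fin_cases a <;> simp [A, det_fin_three]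

theorem vecMul_A_apply (c : Fin 3 → ℝ) (a j : Fin 3) :
    (c ᵥ* A a) j = if j = a then c a else c j + c a := by
  fin_cases a <;> fin_cases j <;> simp [A, vecMul, dotProduct, Fin.sum_univ_three] <;> ring

theorem A_mulVec (b : Fin 3) (x : Fin 3 → ℝ) :
    A b *ᵥ x = x + (omega3 x - x b) • basis3 b := by
  ext i
  fin_cases b <;> fin_cases i <;>
    (simp [A, basis3, omega3, mulVec, dotProduct, Fin.sum_univ_three]; try ring)

/-- `c` consists of the side lengths of a possibly degenerate triangle. The column sums of a product
of Rauzy generators have this property, which keeps the largest one at most twice the middle one. -/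
def IsTriangle (c : Fin 3 → ℝ) : Prop := (∀ j, 0 < c j) ∧ ∀ i j k, i ≠ j → c k ≤ c i + c j

theorem IsTriangle.vecMul_A {c : Fin 3 → ℝ} (hc : IsTriangle c) (a : Fin 3) :
    IsTriangle (c ᵥ* A a) := by
  obtain ⟨hpos, htri⟩ := hc
  refine ⟨fun j => ?_, fun i j k hij => ?_⟩
  · rw [vecMul_A_apply]
    split_ifs
    exacts [hpos a, add_pos (hpos j) (hpos a)]
  · simp only [vecMul_A_apply]
    have hk := htri i j k hij
    have ha := hpos a
    have hi := hpos i
    have hj := hpos j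
    split_ifs <;> subst_vars <;> first | contradiction | linarith

theorem IsTriangle.vecMul_Aw {c : Fin 3 → ℝ} (hc : IsTriangle c) (w : List (Fin 3)) :
    IsTriangle (c ᵥ* Aw w) := by
  induction w generalizing c with
  | nil => rwa [Aw_nil, vecMul_one]
  | cons a w ih => rw [Aw_cons, ← vecMul_vecMul]; exact ih (hc.vecMul_A a)

theorem isTriangle_one_vecMul_Aw (w : List (Fin 3)) : IsTriangle (1 ᵥ* Aw w) :=
  IsTriangle.vecMul_Aw ⟨fun _ => one_pos, fun _ _ _ _ => by norm_num⟩ w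

theorem IsTriangle.vecMul_A_vecMul_A_le {c : Fin 3 → ℝ} (hc : IsTriangle c) {a b : Fin 3}
    (hab : a ≠ b) (i j : Fin 3) : (c ᵥ* A a ᵥ* A b) i ≤ 3 * (c ᵥ* A a ᵥ* A b) j := by
  have hd := (hc.vecMul_A a).1
  obtain ⟨hpos, htri⟩ := hc
  have hdb : (c ᵥ* A a) b = c b + c a := by rw [vecMul_A_apply, if_neg hab.symm]
  have hdi : (c ᵥ* A a) i ≤ 2 * (c ᵥ* A a) b := by
    rw [hdb, vecMul_A_apply]
    split_ifs <;> linarith [hpos a, hpos b, htri a b i hab]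
  rw [vecMul_A_apply _ b, vecMul_A_apply _ b]
  split_ifs <;> linarith [hd b, hd j]

theorem isBalanced_Aw {w : List (Fin 3)} (hw : LastTwoDiff w) : IsBalanced 9 (Aw w) := by
  refine ⟨Aw_nonneg w, by rw [det_Aw]; exact one_ne_zero, fun j => ?_⟩
  have hcol (i : Fin 3) : (1 ᵥ* Aw w) i ≤ 3 * (1 ᵥ* Aw w) j := by
    obtain ⟨u, a, b, rfl, hab⟩ := hw
    rw [Aw_append, Aw_cons, Aw_cons, Aw_nil, mul_one, ← vecMul_vecMul, ← vecMul_vecMul]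
    exact (isTriangle_one_vecMul_Aw u).vecMul_A_vecMul_A_le hab i j
  calc sval1 (Aw w) ≤ ∑ p : Fin 3 × Fin 3, |Aw w p.1 p.2| := sval1_le_sum_abs _
    _ = ∑ i, (1 ᵥ* Aw w) i := by
        rw [Fintype.sum_prod_type_right]
        simp only [abs_of_nonneg (Aw_nonneg w _ _), vecMul, one_dotProduct]
    _ ≤ ∑ _i : Fin 3, 3 * (1 ᵥ* Aw w) j := Finset.sum_le_sum fun i _ => hcol i
    _ = 9 * (1 ᵥ* Aw w) j := by
        rw [Finset.sum_const, Finset.card_univ, Fintype.card_fin, nsmul_eq_mul]; ring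

theorem omega3_Aw_mulVec_pos (w : List (Fin 3)) {x : Fin 3 → ℝ} (hx : x ∈ stdSimplex ℝ (Fin 3)) :
    0 < omega3 (Aw w *ᵥ x) := by
  obtain ⟨j, hj⟩ := Finite.exists_min (1 ᵥ* Aw w)
  rw [omega3_mulVec]
  exact ((isTriangle_one_vecMul_Aw w).1 j).trans_le (le_dotProduct_of_mem_stdSimplex hj hx)

theorem fmap_mem_simplex (w : List (Fin 3)) {x : E3} (hx : x ∈ simplex) : fmap w x ∈ simplex := by
  have hx' := mem_simplex_iff.1 hx
  exact mem_simplex_iff.2 (radialProj_mem_stdSimplex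
    (fun i => dotProduct_nonneg_of_nonneg (Aw_nonneg w i) hx'.1) (omega3_Aw_mulVec_pos w hx'))

theorem fmap_append (u v : List (Fin 3)) {x : E3} (hx : x ∈ simplex) :
    fmap (u ++ v) x = fmap u (fmap v x) := by
  have hω := (omega3_Aw_mulVec_pos v (mem_simplex_iff.1 hx)).ne'
  rw [fmap_eq_projMap, fmap_eq_projMap, fmap_eq_projMap, Aw_append, projMap_mul _ hω]

theorem gasket_subset_simplex : gasket ⊆ simplex := fun x hx => by
  obtain ⟨w, -, y, hy, rfl⟩ := Set.mem_iUnion₂.1 (Set.mem_iInter.1 hx 0)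
  exact fmap_mem_simplex w hy

theorem LastTwoDiff.ne_nil {w : List (Fin 3)} (hw : LastTwoDiff w) : w ≠ [] := by
  obtain ⟨u, a, b, rfl, -⟩ := hw
  exact List.append_ne_nil_of_right_ne_nil u (List.cons_ne_nil a [b])

theorem LastTwoDiff.cons {w : List (Fin 3)} (hw : LastTwoDiff w) (c : Fin 3) :
    LastTwoDiff (c :: w) :=
  let ⟨u, a, b, hu, hab⟩ := hw
  ⟨c :: u, a, b, by rw [hu, List.cons_append], hab⟩

theorem exists_eq_append_replicate (w : List (Fin 3)) :
    ∃ u b k, w = u ++ List.replicate k b ∧ (u = [] ∨ LastTwoDiff u) := by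
  induction w with
  | nil => exact ⟨[], 0, 0, rfl, .inl rfl⟩
  | cons c w ih =>
    obtain ⟨u, b, k, rfl, rfl | hu⟩ := ih
    · rcases eq_or_ne c b with rfl | hcb
      · exact ⟨[], c, k + 1, rfl, .inl rfl⟩
      · rcases k with _ | k
        · exact ⟨[], c, 1, rfl, .inl rfl⟩
        · exact ⟨[c, b], b, k, rfl, .inr ⟨[], c, b, rfl, hcb⟩⟩
    · exact ⟨c :: u, b, k, rfl, .inr (hu.cons c)⟩

/-! ### Constant blocks and points in infinitely many cylinders -/

theorem omega3_add (v u : Fin 3 → ℝ) : omega3 (v + u) = omega3 v + omega3 u := by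
  simp only [omega3_eq_one_dotProduct, dotProduct_add]

theorem omega3_basis3 (b : Fin 3) : omega3 (basis3 b) = 1 :=
  omega3_eq_one_of_mem_stdSimplex (single_mem_stdSimplex ℝ b)

theorem radialProj_basis3 (b : Fin 3) : radialProj (basis3 b) = basis3 b := by
  rw [radialProj, omega3_basis3, inv_one, one_smul]

theorem basis3_mem_simplex (b : Fin 3) : toE (basis3 b) ∈ simplex :=
  mem_simplex_iff.2 (single_mem_stdSimplex ℝ b)

theorem Aw_replicate_mulVec (k : ℕ) (b : Fin 3) (x : Fin 3 → ℝ) :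
    Aw (List.replicate k b) *ᵥ x = x + (k * (omega3 x - x b)) • basis3 b := by
  induction k with
  | zero => simp [Aw_nil]
  | succ k ih =>
    have hb : basis3 b b = 1 := Pi.single_eq_same b 1
    rw [List.replicate_succ, Aw_cons, ← mulVec_mulVec, ih, A_mulVec, omega3_add, omega3_smul,
      omega3_basis3, Pi.add_apply, Pi.smul_apply, hb, smul_eq_mul, add_sub_add_right_eq_sub,
      add_assoc, ← add_smul, Nat.cast_succ, add_one_mul]

theorem norm_sub_basis3_le {x : Fin 3 → ℝ} (hx : x ∈ stdSimplex ℝ (Fin 3)) (b : Fin 3) :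
    ‖x - basis3 b‖ ≤ 1 - x b := by
  have hxb : x b ≤ 1 := (mem_Icc_of_mem_stdSimplex hx b).2
  refine (pi_norm_le_iff_of_nonneg (sub_nonneg.2 hxb)).2 fun i => ?_
  rw [Pi.sub_apply, Real.norm_eq_abs]
  rcases eq_or_ne i b with rfl | hib
  · rw [basis3, Pi.single_eq_same, abs_sub_comm, abs_of_nonneg (sub_nonneg.2 hxb)]
  · rw [basis3, Pi.single_eq_of_ne hib, sub_zero, abs_of_nonneg (hx.1 i), le_sub_iff_add_le, ← hx.2]
    exact Finset.add_le_sum (fun j _ => hx.1 j) (Finset.mem_univ i) (Finset.mem_univ b) hib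

theorem norm_radialProj_Aw_replicate_sub_le (k : ℕ) (b : Fin 3) {x : Fin 3 → ℝ}
    (hx : x ∈ stdSimplex ℝ (Fin 3)) :
    ‖radialProj (Aw (List.replicate k b) *ᵥ x) - basis3 b‖ ≤ 4 * (1 / ((k : ℝ) + 1)) := by
  set t := 1 - x b
  have ht : 0 ≤ t := sub_nonneg.2 (mem_Icc_of_mem_stdSimplex hx b).2
  have ht₁ : t ≤ 1 := sub_le_self 1 (hx.1 b)
  set X := Aw (List.replicate k b) *ᵥ x with hX
  rw [Aw_replicate_mulVec, omega3_eq_one_of_mem_stdSimplex hx] at hX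
  have hωX : omega3 X = 1 + k * t := by
    rw [hX, omega3_add, omega3_smul, omega3_basis3, mul_one, omega3_eq_one_of_mem_stdSimplex hx]
  have hcross : ‖X ⨯₃ basis3 b‖ ≤ 2 * t :=
    calc ‖X ⨯₃ basis3 b‖ = ‖(x - basis3 b) ⨯₃ basis3 b‖ := by simp [hX, cross_self]
      _ ≤ 2 * (‖x - basis3 b‖ * ‖basis3 b‖) := norm_cross_le _ _
      _ ≤ 2 * (t * 1) := by
          gcongr
          · exact norm_sub_basis3_le hx b
          · exact norm_le_one_of_mem_stdSimplex (single_mem_stdSimplex ℝ b)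
      _ = 2 * t := by rw [mul_one]
  calc ‖radialProj X - basis3 b‖ = ‖radialProj X - radialProj (basis3 b)‖ := by
        rw [radialProj_basis3]
    _ ≤ 2 * ((omega3 X)⁻¹ * (omega3 (basis3 b))⁻¹ * ‖X ⨯₃ basis3 b‖) :=
        norm_radialProj_sub_radialProj_le (by rw [hωX]; positivity)
          (by rw [omega3_basis3]; exact one_pos)
    _ ≤ 2 * ((1 + k * t)⁻¹ * 1⁻¹ * (2 * t)) := by rw [hωX, omega3_basis3]; gcongr
    _ = 4 * (t / (1 + k * t)) := by ring
    _ ≤ 4 * (1 / ((k : ℝ) + 1)) := by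
        gcongr 4 * ?_
        rw [div_le_div_iff₀ (by positivity) (by positivity)]
        linarith

theorem tendsto_fmap_replicate (b : Fin 3) :
    Filter.Tendsto (fun p : ℕ × E3 => fmap (List.replicate p.1 b) p.2)
      (Filter.atTop ×ˢ Filter.principal simplex) (𝓝 (toE (basis3 b))) := by
  have hlim : Filter.Tendsto (fun p : ℕ × E3 => 3 * (4 * (1 / ((p.1 : ℝ) + 1))))
      (Filter.atTop ×ˢ Filter.principal simplex) (𝓝 0) := by
    simpa using ((tendsto_one_div_add_atTop_nhds_zero_nat (𝕜 := ℝ)).comp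
      Filter.tendsto_fst).const_mul 4 |>.const_mul 3
  refine tendsto_iff_dist_tendsto_zero.2 (squeeze_zero' (.of_forall fun _ => dist_nonneg) ?_ hlim)
  refine Filter.eventually_prod_principal_iff.2 (.of_forall fun k x hx => ?_)
  refine (dist_le_three_mul_norm _ _).trans ?_
  gcongr
  exact norm_radialProj_Aw_replicate_sub_le k b (mem_simplex_iff.1 hx)

/-- The points coded by eventually constant sequences: the images of the vertices of the simplex
under all the maps `fmap w`. -/
def eventuallyConstantPoints : Set E3 :=
  Set.range fun p : List (Fin 3) × Fin 3 => fmap p.1 (toE (basis3 p.2))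

theorem eventually_notMem_cylinder {x : E3} (hx : x ∉ eventuallyConstantPoints)
    (u : List (Fin 3)) (b : Fin 3) :
    ∀ᶠ k : ℕ in Filter.atTop, x ∉ fmap (u ++ List.replicate k b) '' simplex := by
  have hub : fmap u (toE (basis3 b)) ≠ x := fun h => hx ⟨(u, b), h⟩
  have hcont : ContinuousAt (fmap u) (toE (basis3 b)) :=
    continuousAt_projMap (omega3_Aw_mulVec_pos u (mem_simplex_iff.1 (basis3_mem_simplex b))).ne'
  have hne := (tendsto_fmap_replicate b).eventually (hcont.eventually_ne hub)
  filter_upwards [Filter.eventually_prod_principal_iff.1 hne] with k hk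
  rintro ⟨y, hy, hyx⟩
  exact hk y hy (by rw [← fmap_append u _ hy, hyx])

theorem image_fmap_append_subset (u v : List (Fin 3)) :
    fmap (u ++ v) '' simplex ⊆ fmap u '' simplex := by
  rintro _ ⟨y, hy, rfl⟩
  exact ⟨fmap v y, fmap_mem_simplex v hy, (fmap_append u v hy).symm⟩

theorem infinite_lastTwoDiff_cylinders {x : E3} (hx : x ∈ gasket)
    (hxc : x ∉ eventuallyConstantPoints) :
    {w : {w : List (Fin 3) // LastTwoDiff w} | x ∈ fmap w '' simplex}.Infinite := by
  intro hfin
  set S : Set (List (Fin 3)) := insert []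
    (Subtype.val '' {w : {w : List (Fin 3) // LastTwoDiff w} | x ∈ fmap w '' simplex})
  have hS : S.Finite := (hfin.image _).insert _
  have hev : ∀ᶠ k : ℕ in Filter.atTop, ∀ u ∈ S, ∀ b,
      x ∉ fmap (u ++ List.replicate k b) '' simplex :=
    (Filter.eventually_all_finite hS).2 fun u _ => Filter.eventually_all.2
      (eventually_notMem_cylinder hxc u)
  obtain ⟨k₀, hk₀⟩ := Filter.eventually_atTop.1 hev
  obtain ⟨m, hm⟩ := (hS.image List.length).bddAbove
  obtain ⟨w, hw, hxw⟩ := Set.mem_iUnion₂.1 (Set.mem_iInter.1 hx (k₀ + m))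
  obtain ⟨u, b, k, rfl, hu⟩ := exists_eq_append_replicate w
  have huS : u ∈ S := hu.imp id fun hu => ⟨⟨u, hu⟩, image_fmap_append_subset u _ hxw, rfl⟩
  have hum : u.length ≤ m := hm ⟨u, huS, rfl⟩
  have hlen : u.length + k = k₀ + m + 1 := by
    rwa [Set.mem_ofPred_eq, List.length_append, List.length_replicate] at hw
  exact hk₀ k (by lia) u huS b hxw

/-! ### Dimension of the gasket -/

theorem dimH_gasket_le_of_summable {s : ℝ} (hs : 0 < s)
    (hsum : Summable fun w : {w : List (Fin 3) // w ≠ []} => phi s (Aw w.1)) :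
    dimH gasket ≤ ENNReal.ofReal s := by
  obtain ⟨C, hC⟩ := exists_forall_isBalanced_hasFiniteCover 9 hs.le
  have hinj := Subtype.impEmbedding LastTwoDiff (· ≠ []) (fun _ => LastTwoDiff.ne_nil) |>.injective
  have htsum : ∑' w : {w // LastTwoDiff w}, ENNReal.ofReal (C * phi s (Aw w)) ≠ ∞ :=
    ((hsum.comp_injective hinj).mul_left C).tsum_ofReal_ne_top
  exact dimH_le_ofReal_of_hausdorffMeasure_diff_eq_zero hs.le (Set.countable_range _)
    (hausdorffMeasure_eq_zero_of_hasFiniteCover hs (fun w => hC _ (isBalanced_Aw w.2)) htsum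
      fun x hx => infinite_lastTwoDiff_cylinders hx.1 hx.2)

theorem dimH_gasket_le_two : dimH gasket ≤ ENNReal.ofReal 2 := by
  have hsub : gasket ⊆ EuclideanSpace.equiv (Fin 3) ℝ ⁻¹' stdSimplex ℝ (Fin 3) :=
    fun x hx => mem_simplex_iff.1 (gasket_subset_simplex hx)
  calc dimH gasket ≤ dimH (EuclideanSpace.equiv (Fin 3) ℝ ⁻¹' stdSimplex ℝ (Fin 3)) :=
        dimH_mono hsub
    _ = dimH (stdSimplex ℝ (Fin 3)) := ContinuousLinearEquiv.dimH_preimage _ _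
    _ ≤ (2 : ℕ) := dimH_stdSimplex_le (Fintype.card_fin 3)
    _ = ENNReal.ofReal 2 := by simp

/-- If the Falconer series at exponent `s ∈ (0,2]` converges then `dimH X ≤ s`;
in particular `dimH X ≤ s_A`. -/
theorem rauzy_dimH_upper_bound :
    (∀ s : ℝ, s ∈ Set.Ioc (0:ℝ) 2 →
        (Summable fun w : {w : List (Fin 3) // w ≠ []} => phi s (Aw w.1)) →
        dimH gasket ≤ ENNReal.ofReal s) ∧
    dimH gasket ≤ ENNReal.ofReal sA :=
  have hmain : ∀ s : ℝ, s ∈ Set.Ioc (0:ℝ) 2 →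
      (Summable fun w : {w : List (Fin 3) // w ≠ []} => phi s (Aw w.1)) →
      dimH gasket ≤ ENNReal.ofReal s := fun _ hs => dimH_gasket_le_of_summable hs.1
  ⟨hmain, le_ofReal_sSup_of_forall_Ioc hmain dimH_gasket_le_two⟩
end

section
/- The Hausdorff dimension of the Rauzy gasket is at least 3/2: dimH X ≥ 3/2. -/
open Matrix MeasureTheory

/-!
Fix a large `m`. The blocks `!![p, q; r, s]` of determinant one and size about `m` are products of
the first two Rauzy generators. Composed with the transposition `tau`, which preserves the gasket,
they act in a projective chart as an iterated function system of about `m ^ 2` contractions whose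
limit set is mapped into the gasket by a locally Lipschitz change of coordinates.

The self-similar measure with equal weights on the limit set spreads out in two steps. A strip of
width `δ` about a line meets only about `m` of the pieces and pulls back to a strip of width about
`m * δ`, so each factor `m` in the width costs a factor `m` in mass and strips have mass `≲ δ ^ α`
for every `α < 1` once `m` is large. A piece of such a strip of length `L` meets boundedly many
pieces of the limit set and pulls back to one of length about `m ^ 2 * L`; it loses a factor
`m ^ 2` of its mass while `δ ^ α * √L` loses only about `m ^ (1 + α)`, so its mass is
`≲ δ ^ α * √L`. Taking `δ = L = r` bounds the mass of balls by `r ^ (α + 1 / 2)`, and the mass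
distribution principle applies.
-/

open scoped ENNReal NNReal Finset

lemma scale_induction {b δ₀ : ℝ} (hb : 1 < b) {P : ℝ → Prop}
    (large : ∀ δ, δ₀ ≤ δ → P δ) (step : ∀ δ, 0 < δ → δ < δ₀ → P (b * δ) → P δ)
    {δ : ℝ} (hδ : 0 < δ) : P δ := by
  obtain ⟨n, hn⟩ := pow_unbounded_of_one_lt (δ₀ / δ) hb
  rw [div_lt_iff₀ hδ] at hn
  induction n generalizing δ with
  | zero => exact large δ (by simpa using hn.le)
  | succ n ih =>
    rcases le_or_gt δ₀ δ with h | h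
    · exact large δ h
    · exact step δ hδ h (ih (by positivity) (by rwa [pow_succ, mul_assoc] at hn))

lemma exists_nat_mul_rpow_le {α : ℝ} (hα : α < 1) {b : ℝ} (hb : 0 ≤ b) (a c : ℝ) :
    ∃ n : ℕ, c ≤ (n : ℝ) ∧ a * (b * n) ^ α ≤ n := by
  have growth : Filter.Tendsto (fun n : ℕ => (n : ℝ) ^ (1 - α)) Filter.atTop Filter.atTop :=
    (tendsto_rpow_atTop (sub_pos.2 hα)).comp tendsto_natCast_atTop_atTop
  obtain ⟨n, pow_large, n_large, hn⟩ := ((growth.eventually_ge_atTop (a * b ^ α)).and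
    ((tendsto_natCast_atTop_atTop.eventually_ge_atTop c).and (Filter.eventually_gt_atTop 0))).exists
  have hn : (0 : ℝ) < n := by exact_mod_cast hn
  refine ⟨n, n_large, ?_⟩
  calc a * (b * n) ^ α = a * b ^ α * (n : ℝ) ^ α := by rw [Real.mul_rpow hb hn.le, mul_assoc]
    _ ≤ (n : ℝ) ^ (1 - α) * (n : ℝ) ^ α := by gcongr
    _ = n := by rw [← Real.rpow_add hn, sub_add_cancel, Real.rpow_one]

/-- The sequence with first term `x.1` and tail `x.2`. -/
def consSeq {ι : Type*} (x : ι × (ℕ → ι)) : ℕ → ι := fun n => Nat.casesOn n x.1 x.2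

lemma measurable_consSeq {ι : Type*} [MeasurableSpace ι] : Measurable (consSeq (ι := ι)) := by
  rw [measurable_pi_iff]
  rintro (_ | n)
  · exact measurable_fst
  · exact (measurable_pi_apply n).comp measurable_snd

lemma prod_eq_zero_term_mul_prod_preimage_succ {M : Type*} [CommMonoid M] (s : Finset ℕ)
    (f : ℕ → M) :
    ∏ i ∈ s, f i = (if 0 ∈ s then f 0 else 1) *
      ∏ i ∈ s.preimage Nat.succ Nat.succ_injective.injOn, f (i + 1) := by
  classical
  have not_succ : {i ∈ s | i ∉ Set.range Nat.succ} = if 0 ∈ s then {0} else ∅ := by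
    rw [← Finset.filter_eq' s 0]
    exact Finset.filter_congr fun i _ => by simp [Nat.range_succ]
  rw [← Finset.prod_filter_not_mul_prod_filter s (· ∈ Set.range Nat.succ), not_succ,
    ← Finset.prod_preimage' _ _ Nat.succ_injective.injOn]
  split_ifs <;> simp

lemma map_consSeq_infinitePi {ι : Type*} [MeasurableSpace ι] (μ : Measure ι)
    [IsProbabilityMeasure μ] :
    (μ.prod (Measure.infinitePi fun _ : ℕ => μ)).map consSeq =
      Measure.infinitePi fun _ : ℕ => μ := by
  refine Measure.eq_infinitePi _ fun s t ht => ?_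
  have preimage_eq : consSeq ⁻¹' Set.pi s t = (if 0 ∈ s then t 0 else Set.univ) ×ˢ
      Set.pi (s.preimage Nat.succ Nat.succ_injective.injOn) fun i => t (i + 1) := by
    ext ⟨i, x⟩
    constructor
    · intro h
      refine ⟨?_, fun j hj => h (j + 1) (by simpa using hj)⟩
      split_ifs with h0
      exacts [h 0 h0, trivial]
    · rintro ⟨h0, hx⟩ (_ | j) hj
      · rwa [if_pos (Finset.mem_coe.1 hj)] at h0
      · exact hx j (by simpa using hj)
  rw [Measure.map_apply measurable_consSeq
      (MeasurableSet.pi s.countable_toSet fun i _ => ht i), preimage_eq, Measure.prod_prod,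
    Measure.infinitePi_pi _ fun i _ => ht (i + 1), prod_eq_zero_term_mul_prod_preimage_succ s]
  split_ifs <;> simp

lemma exists_continuous_coding {ι K : Type*} [Finite ι] [TopologicalSpace ι] [DiscreteTopology ι]
    [MetricSpace K] [CompleteSpace K] [Nonempty K] {c : ℝ≥0} {f : ι → K → K}
    (hc : c < 1) (hf : ∀ i, LipschitzWith c (f i)) :
    ∃ π : (ℕ → ι) → K, Continuous π ∧ ∀ i ω, π (consSeq (i, ω)) = f i (π ω) := by
  have hcont : Continuous fun x : ι × K => f x.1 x.2 := by
    rw [continuous_prod_of_discrete_left]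
    exact fun i => (hf i).continuous
  let Φ : C(ℕ → ι, K) → C(ℕ → ι, K) := fun π =>
    ⟨fun ω => f (ω 0) (π fun n => ω (n + 1)), Continuous.comp hcont
      (f := fun ω : ℕ → ι => (ω 0, π fun n => ω (n + 1))) (by fun_prop)⟩
  have hΦ : ContractingWith c Φ := by
    refine ⟨hc, LipschitzWith.of_dist_le_mul fun π π' => ?_⟩
    rw [ContinuousMap.dist_le (by positivity)]
    intro ω
    refine ((hf (ω 0)).dist_le_mul _ _).trans ?_
    gcongr
    exact ContinuousMap.dist_apply_le_dist _
  have : Nonempty C(ℕ → ι, K) := ⟨ContinuousMap.const _ (Classical.arbitrary K)⟩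
  obtain ⟨π, hπ⟩ : ∃ π, Φ π = π := ⟨_, hΦ.fixedPoint_isFixedPt⟩
  exact ⟨π, π.continuous, fun i ω => (DFunLike.congr_fun hπ (consSeq (i, ω))).symm⟩

/-- A measure is self-similar for a finite family of maps if it is the average of its images
under these maps, with equal weights. -/
def IsSelfSimilar {ι K : Type*} [Fintype ι] [MeasurableSpace K] (f : ι → K → K)
    (μ : Measure K) : Prop :=
  μ = (Fintype.card ι : ℝ≥0∞)⁻¹ • ∑ i, μ.map (f i)

lemma exists_isSelfSimilar {ι K : Type*} [Fintype ι] [Nonempty ι] [MetricSpace K]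
    [CompleteSpace K] [Nonempty K] [MeasurableSpace K] [BorelSpace K] {c : ℝ≥0} {f : ι → K → K}
    (hc : c < 1) (hf : ∀ i, LipschitzWith c (f i)) :
    ∃ (Λ : Set K) (μ : Measure K), IsProbabilityMeasure μ ∧ IsSelfSimilar f μ ∧ μ Λ = 1 ∧
      ∀ x ∈ Λ, ∃ i, ∃ y ∈ Λ, f i y = x := by
  let : TopologicalSpace ι := ⊥
  let : MeasurableSpace ι := ⊤
  have : DiscreteTopology ι := ⟨rfl⟩
  obtain ⟨π, hπ, hcons⟩ := exists_continuous_coding hc hf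
  let ν : Measure ι := (PMF.uniformOfFintype ι).toMeasure
  set P : Measure (ℕ → ι) := Measure.infinitePi fun _ : ℕ => ν with hP
  have hπm : Measurable π := hπ.measurable
  refine ⟨Set.range π, P.map π, Measure.isProbabilityMeasure_map hπm.aemeasurable, ?_, ?_, ?_⟩
  · ext S hS
    conv_lhs => rw [hP, ← map_consSeq_infinitePi ν, Measure.map_map hπm measurable_consSeq,
      Measure.map_apply (hπm.comp measurable_consSeq) hS,
      Measure.prod_apply (hπm.comp measurable_consSeq hS), lintegral_fintype]
    simp only [Measure.smul_apply, Measure.finsetSum_apply, smul_eq_mul, Finset.mul_sum]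
    refine Finset.sum_congr rfl fun i _ => ?_
    have slice : Prod.mk i ⁻¹' (π ∘ consSeq ⁻¹' S) = π ⁻¹' (f i ⁻¹' S) := by
      ext ω
      simp only [Set.mem_preimage, Function.comp_apply, hcons]
    have hfi : Measurable (f i) := (hf i).continuous.measurable
    rw [slice, Measure.map_apply hfi hS, Measure.map_apply hπm (hfi hS), mul_comm,
      PMF.toMeasure_apply_singleton _ _ (measurableSet_singleton i), PMF.uniformOfFintype_apply]
  · rw [Measure.map_apply hπm (isCompact_range hπ).measurableSet, Set.preimage_range, measure_univ]
  · rintro _ ⟨ω, rfl⟩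
    refine ⟨ω 0, _, ⟨fun n => ω (n + 1), rfl⟩, ?_⟩
    rw [← hcons]
    congr 1
    ext (_ | n) <;> rfl

lemma IsSelfSimilar.measureReal_le {ι K : Type*} [Fintype ι] [MeasurableSpace K] {f : ι → K → K}
    {μ : Measure K} [IsFiniteMeasure μ] (hμ : IsSelfSimilar f μ) (hf : ∀ i, Measurable (f i))
    {S : Set K} (hS : MeasurableSet S) {n c : ℝ} (hc : 0 ≤ c)
    (hn : ({i | (f i ⁻¹' S).Nonempty}.ncard : ℝ) ≤ n)
    (hle : ∀ i, (f i ⁻¹' S).Nonempty → μ.real (f i ⁻¹' S) ≤ c) :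
    μ.real S ≤ n * c / Fintype.card ι := by
  classical
  have average : μ.real S = (∑ i, μ.real (f i ⁻¹' S)) / Fintype.card ι := by
    conv_lhs => rw [hμ]
    rw [measureReal_ennreal_smul_apply, ENNReal.toReal_inv, ENNReal.toReal_natCast, inv_mul_eq_div,
      Measure.real, Measure.finsetSum_apply, ENNReal.toReal_sum fun i _ => measure_ne_top _ _]
    simp only [Measure.map_apply (hf _) hS, Measure.real]
  rw [average]
  gcongr
  calc ∑ i, μ.real (f i ⁻¹' S)
      ≤ ∑ i, if (f i ⁻¹' S).Nonempty then c else 0 := by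
        gcongr with i
        split_ifs with h
        · exact hle i h
        · simp [Set.not_nonempty_iff_eq_empty.1 h]
    _ = {i | (f i ⁻¹' S).Nonempty}.ncard * c := by
        simp [← Finset.sum_filter, Set.ncard_eq_toFinset_card']
    _ ≤ n * c := by gcongr

lemma measureReal_le_mul_rpow_diam {X : Type*} [PseudoMetricSpace X] [MeasurableSpace X]
    {μ : Measure X} [IsFiniteMeasure μ] {d : ℝ} (hd : 0 ≤ d) {C : ℝ} {x : X}
    (ball : ∀ r > 0, μ.real (Metric.closedBall x r) ≤ C * r ^ d) {s : Set X} (hx : x ∈ s)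
    (hs : Bornology.IsBounded s) : μ.real s ≤ C * Metric.diam s ^ d := by
  have right_limit : Filter.Tendsto (fun r : ℝ => C * r ^ d)
      (nhdsWithin (Metric.diam s) (Set.Ioi (Metric.diam s))) (nhds (C * Metric.diam s ^ d)) :=
    (((Real.continuous_rpow_const hd).const_mul C).tendsto _).mono_left nhdsWithin_le_nhds
  refine ge_of_tendsto right_limit ?_
  filter_upwards [self_mem_nhdsWithin] with r hr
  have subset_ball : s ⊆ Metric.closedBall x r := fun y hy =>
    (Metric.dist_le_diam_of_mem hs hy hx).trans (Set.mem_Ioi.1 hr).le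
  exact (measureReal_mono subset_ball).trans (ball r (Metric.diam_nonneg.trans_lt hr))

lemma le_dimH_of_measureReal_closedBall_le {X : Type*} [MetricSpace X] [MeasurableSpace X]
    [BorelSpace X] {μ : Measure X} [IsFiniteMeasure μ] {s : Set X} (hs : μ s ≠ 0) {d : ℝ≥0}
    {C : ℝ} (hC : 0 < C)
    (ball : ∀ x ∈ s, ∀ r > 0, μ.real (Metric.closedBall x r) ≤ C * r ^ (d : ℝ)) :
    (d : ℝ≥0∞) ≤ dimH s := by
  have hC0 : ENNReal.ofReal C ≠ 0 := by simpa using hC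
  have le_hausdorff : (ENNReal.ofReal C)⁻¹ • μ.restrict s ≤ μH[(d : ℝ)] := by
    refine Measure.le_hausdorffMeasure _ _ 1 one_pos fun u hu => ?_
    rw [Measure.smul_apply, smul_eq_mul, ENNReal.inv_mul_le_iff hC0 ENNReal.ofReal_ne_top]
    refine (measure_mono subset_closure).trans ?_
    rw [Measure.restrict_apply isClosed_closure.measurableSet, ← Metric.ediam_closure]
    rcases (closure u ∩ s).eq_empty_or_nonempty with h0 | ⟨x, hxu, hxs⟩
    · simp [h0]
    have hfin : Metric.ediam (closure u) ≠ ⊤ := by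
      rw [Metric.ediam_closure]
      exact (hu.trans_lt ENNReal.one_lt_top).ne
    refine (measure_mono Set.inter_subset_left).trans ?_
    rw [← ENNReal.ofReal_toReal hfin,
      ENNReal.ofReal_rpow_of_nonneg ENNReal.toReal_nonneg d.coe_nonneg, ← ENNReal.ofReal_mul hC.le,
      ENNReal.le_ofReal_iff_toReal_le (measure_ne_top _ _) (by positivity)]
    exact measureReal_le_mul_rpow_diam d.coe_nonneg (ball x hxs) hxu
      (Metric.isBounded_iff_ediam_ne_top.2 hfin)
  refine le_dimH_of_hausdorffMeasure_ne_zero fun h0 => hs ?_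
  have := le_hausdorff s
  rw [h0, Measure.smul_apply, smul_eq_mul, nonpos_iff_eq_zero, mul_eq_zero,
    Measure.restrict_apply_self] at this
  exact this.resolve_left (ENNReal.inv_ne_zero.2 ENNReal.ofReal_ne_top)

lemma ncard_le_of_separated {ι : Type*} (f : ι → ℝ) {ε x y : ℝ} (hε : 0 < ε) (hxy : x ≤ y)
    {s : Set ι} (hs : ∀ i ∈ s, f i ∈ Set.Icc x y)
    (separated : ∀ i ∈ s, ∀ j ∈ s, i ≠ j → ε ≤ |f i - f j|) :
    (s.ncard : ℝ) ≤ (y - x) / ε + 1 := by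
  have maps : ∀ i ∈ s,
      ⌊(f i - x) / ε⌋₊ ∈ ((Finset.range (⌊(y - x) / ε⌋₊ + 1) : Finset ℕ) : Set ℕ) := by
    intro i hi
    rw [Finset.mem_coe, Finset.mem_range, Nat.lt_succ_iff]
    gcongr
    exact (hs i hi).2
  have inj : Set.InjOn (fun i => ⌊(f i - x) / ε⌋₊) s := by
    intro i hi j hj hij
    by_contra hne
    have nonneg : ∀ k ∈ s, 0 ≤ (f k - x) / ε := fun k hk =>
      div_nonneg (sub_nonneg.2 (hs k hk).1) hε.le
    have lt_one : |(f i - x) / ε - (f j - x) / ε| < 1 := Int.abs_sub_lt_one_of_floor_eq_floor (by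
      rw [← Int.natCast_floor_eq_floor (nonneg i hi), ← Int.natCast_floor_eq_floor (nonneg j hj)]
      exact_mod_cast hij)
    rw [← sub_div, sub_sub_sub_cancel_right, abs_div, abs_of_pos hε, div_lt_one hε] at lt_one
    exact (separated i hi j hj hne).not_gt lt_one
  have card_le := Set.ncard_le_ncard_of_injOn _ maps inj
  rw [Set.ncard_coe_finset, Finset.card_range] at card_le
  calc (s.ncard : ℝ) ≤ ⌊(y - x) / ε⌋₊ + 1 := by exact_mod_cast card_le
    _ ≤ (y - x) / ε + 1 := by
      gcongr
      exact Nat.floor_le (div_nonneg (sub_nonneg.2 hxy) hε.le)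

lemma sum_Icc_two_inv_sq_le (n : ℕ) : ∑ d ∈ Finset.Icc 2 n, ((d : ℝ) ^ 2)⁻¹ ≤ 3 / 4 := by
  rcases lt_or_ge n 2 with hn | hn
  · rw [Finset.Icc_eq_empty (by omega)]
    norm_num
  rw [Finset.Icc_eq_cons_Ioc hn, Finset.sum_cons]
  have tail := sum_Ioc_inv_sq_le_sub (α := ℝ) two_ne_zero hn
  have : (0 : ℝ) ≤ (n : ℝ)⁻¹ := by positivity
  norm_num at tail ⊢
  linarith

lemma sq_div_four_le_card_coprime (n : ℕ) :
    (n : ℝ) ^ 2 / 4 ≤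
      #{x ∈ Finset.Ioc 0 n ×ˢ Finset.Ioc 0 n | Nat.Coprime x.1 x.2} := by
  classical
  set I := Finset.Ioc 0 n with hI
  have cover : {x ∈ I ×ˢ I | ¬ Nat.Coprime x.1 x.2} ⊆
      (Finset.Icc 2 n).biUnion fun d => {a ∈ I | d ∣ a} ×ˢ {b ∈ I | d ∣ b} := by
    rintro ⟨a, b⟩ hab
    simp only [hI, Finset.mem_filter, Finset.mem_product, Finset.mem_Ioc, Finset.mem_biUnion,
      Finset.mem_Icc, Nat.coprime_iff_gcd_eq_one] at hab ⊢
    have gcd_pos := Nat.gcd_pos_of_pos_left b hab.1.1.1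
    have gcd_le := Nat.gcd_le_left b hab.1.1.1
    exact ⟨a.gcd b, ⟨by omega, by omega⟩, ⟨hab.1.1, Nat.gcd_dvd_left a b⟩, hab.1.2,
      Nat.gcd_dvd_right a b⟩
  have not_coprime_le : (#{x ∈ I ×ˢ I | ¬ Nat.Coprime x.1 x.2} : ℝ) ≤ 3 / 4 * n ^ 2 := by
    calc (#{x ∈ I ×ˢ I | ¬ Nat.Coprime x.1 x.2} : ℝ)
        ≤ ∑ d ∈ Finset.Icc 2 n, ((n / d : ℕ) : ℝ) ^ 2 := by
          have := (Finset.card_le_card cover).trans Finset.card_biUnion_le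
          simp only [Finset.card_product, hI, Nat.Ioc_filter_dvd_card_eq_div, ← sq] at this
          exact_mod_cast this
      _ ≤ ∑ d ∈ Finset.Icc 2 n, ((d : ℝ) ^ 2)⁻¹ * n ^ 2 := by
          gcongr with d _
          rw [inv_mul_eq_div, ← div_pow]
          gcongr
          exact Nat.cast_div_le
      _ ≤ 3 / 4 * n ^ 2 := by
          rw [← Finset.sum_mul]
          gcongr
          exact sum_Icc_two_inv_sq_le n
  have card_add : (#{x ∈ I ×ˢ I | Nat.Coprime x.1 x.2} : ℝ) +
      #{x ∈ I ×ˢ I | ¬ Nat.Coprime x.1 x.2} = n ^ 2 := by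
    have := Finset.card_filter_add_card_filter_not (s := I ×ˢ I) fun x => Nat.Coprime x.1 x.2
    rw [Finset.card_product, hI, Nat.card_Ioc, Nat.sub_zero, ← sq] at this
    exact_mod_cast this
  linarith

namespace RauzyGasket

/-- The chart domain of the limit set at scale `m`. A point `(t, z)` of the chart stands for the
direction of the vector `bary (t, z)`. -/
def region (m : ℝ) : Set (ℝ × ℝ) := Set.Icc (1 / 4) (3 / 5) ×ˢ Set.Icc 0 (1 / (4 * m))

/-- The matrices `!![p, q; r, s]` of determinant one with entries in `ℕ`. Each of them yields
a word in the Rauzy generators, see `exists_word_eq_corner`. -/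
structure Block where
  (p q r s : ℕ)
  det : p * s = q * r + 1

namespace Block

/-- The common denominator of the two coordinates of `Block.act`. -/
def den (B : Block) (x : ℝ × ℝ) : ℝ := B.r * x.1 + B.s * (1 + x.1 - 2 * x.2)

/-- The projective action of a block, read in the chart `bary`. -/
noncomputable def act (B : Block) (x : ℝ × ℝ) : ℝ × ℝ :=
  ((B.p * x.1 + B.q * (1 + x.1 - 2 * x.2)) / B.den x, (x.1 - x.2) / B.den x)

/-- The number near which the first coordinates of the values of `Block.act` cluster. -/
noncomputable def slope (B : Block) : ℝ := B.q / B.s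

/-- Blocks with entries of order `m` whose slope lies in `[1/3, 1/2]`. -/
structure IsBalanced (B : Block) (m : ℝ) : Prop where
  r_lt_s : B.r < B.s
  three_mul_le_s : 3 * m ≤ B.s
  s_le : (B.s : ℝ) ≤ 40 * m
  s_le_three_mul_q : (B.s : ℝ) ≤ 3 * B.q
  two_mul_q_le : 2 * (B.q : ℝ) ≤ B.s

variable {B : Block} {m : ℝ} {x y : ℝ × ℝ}

lemma IsBalanced.r_le_s (hB : B.IsBalanced m) : (B.r : ℝ) ≤ B.s := by
  exact_mod_cast hB.r_lt_s.le

lemma det_real (B : Block) : (B.p * B.s : ℝ) = B.q * B.r + 1 := by exact_mod_cast B.det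

lemma snd_le_of_mem_region (hm : 100000 ≤ m) (hx : x ∈ region m) : x.2 ≤ 1 / 400000 :=
  hx.2.2.trans (one_div_le_one_div_of_le (by norm_num) (by linarith))

lemma IsBalanced.s_pos (hB : B.IsBalanced m) (hm : 100000 ≤ m) : (0 : ℝ) < B.s := by
  linarith [hB.three_mul_le_s]

lemma s_le_den (hm : 100000 ≤ m) (hx : x ∈ region m) :
    B.s ≤ B.den x := by
  have hz := snd_le_of_mem_region hm hx
  have ht := hx.1.1
  calc (B.s : ℝ) = B.r * 0 + B.s * 1 := by ring
    _ ≤ B.den x := by unfold den; gcongr <;> linarith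

lemma IsBalanced.den_le (hB : B.IsBalanced m) (hx : x ∈ region m) :
    B.den x ≤ 11 / 5 * B.s := by
  obtain ⟨⟨ht₀, ht⟩, hz, -⟩ := hx
  calc B.den x ≤ B.s * (3 / 5) + B.s * (8 / 5) := by
        unfold den
        gcongr
        · exact hB.r_lt_s.le
        · linarith
    _ = 11 / 5 * B.s := by ring

lemma IsBalanced.den_pos (hB : B.IsBalanced m) (hm : 100000 ≤ m) (hx : x ∈ region m) :
    0 < B.den x :=
  (hB.s_pos hm).trans_le (s_le_den hm hx)

lemma act_fst_eq (hs : (B.s : ℝ) ≠ 0) (hx : B.den x ≠ 0) :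
    (B.act x).1 = B.slope + x.1 / (B.s * B.den x) := by
  have numerator : B.s * (B.p * x.1 + B.q * (1 + x.1 - 2 * x.2)) = B.q * B.den x + x.1 := by
    unfold den
    linear_combination x.1 * B.det_real
  rw [act, slope]
  field_simp
  rw [mul_comm, numerator]

lemma IsBalanced.abs_act_fst_sub_slope_le (hB : B.IsBalanced m) (hm : 100000 ≤ m)
    (hx : x ∈ region m) : |(B.act x).1 - B.slope| ≤ 1 / m ^ 2 := by
  have hs := hB.s_pos hm
  have hD := hB.den_pos hm hx
  obtain ⟨ht₀, ht⟩ := hx.1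
  rw [act_fst_eq hs.ne' hD.ne', add_sub_cancel_left, abs_of_nonneg (by positivity), sq]
  have hms : m ≤ B.s := by linarith [hB.three_mul_le_s]
  gcongr
  · linarith
  · exact hms.trans (s_le_den hm hx)

lemma IsBalanced.slope_mem (hB : B.IsBalanced m) (hm : 100000 ≤ m) :
    B.slope ∈ Set.Icc (1 / 3) (1 / 2) := by
  have hs := hB.s_pos hm
  rw [slope, Set.mem_Icc, le_div_iff₀ hs, div_le_iff₀ hs]
  constructor <;> linarith [hB.s_le_three_mul_q, hB.two_mul_q_le]

lemma IsBalanced.mapsTo_region (hB : B.IsBalanced m) (hm : 100000 ≤ m) :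
    Set.MapsTo B.act (region m) (region m) := by
  intro x hx
  have hD := hB.den_pos hm hx
  have hz := snd_le_of_mem_region hm hx
  have near := abs_le.1 (hB.abs_act_fst_sub_slope_le hm hx)
  have hslope := hB.slope_mem hm
  have small : 1 / m ^ 2 ≤ 1 / 15 := one_div_le_one_div_of_le (by norm_num) (by nlinarith)
  refine ⟨⟨by linarith [hslope.1], by linarith [hslope.2]⟩,
    div_nonneg (by linarith [hx.1.1]) hD.le, ?_⟩
  rw [act, div_le_div_iff₀ hD (by linarith)]
  nlinarith [s_le_den (B := B) hm hx, hB.three_mul_le_s, hx.1.2, hx.2.1]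

lemma IsBalanced.abs_den_sub_den_le (hB : B.IsBalanced m) :
    |B.den y - B.den x| ≤ 4 * B.s * dist x y := by
  have hr := hB.r_le_s
  calc |B.den y - B.den x| = |(B.r + B.s) * (y.1 - x.1) - 2 * B.s * (y.2 - x.2)| := by
        unfold den; ring_nf
    _ ≤ (B.r + B.s) * |y.1 - x.1| + 2 * B.s * |y.2 - x.2| := by
        refine (abs_sub _ _).trans_eq ?_
        rw [abs_mul, abs_mul, abs_of_nonneg (by positivity : (0 : ℝ) ≤ B.r + B.s),
          abs_of_nonneg (by positivity : (0 : ℝ) ≤ 2 * B.s)]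
    _ ≤ (B.s + B.s) * dist x y + 2 * B.s * dist x y := by
        rw [Prod.dist_eq, Real.dist_eq, Real.dist_eq, abs_sub_comm y.1, abs_sub_comm y.2]
        gcongr
        exacts [le_max_left _ _, le_max_right _ _]
    _ = 4 * B.s * dist x y := by ring

lemma IsBalanced.abs_div_den_sub_le (hB : B.IsBalanced m) (hm : 100000 ≤ m) (hx : x ∈ region m)
    (hy : y ∈ region m) {u v : ℝ} (hv : |v| ≤ 1) (huv : |u - v| ≤ 2 * dist x y) :
    |u / B.den x - v / B.den y| ≤ dist x y / 2 := by
  have hs := hB.s_pos hm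
  have hDx := hB.den_pos hm hx
  have hDy := hB.den_pos hm hy
  have hs₁₂ : 12 ≤ (B.s : ℝ) := by linarith [hB.three_mul_le_s]
  calc |u / B.den x - v / B.den y|
      = |(u - v) / B.den x + v * (B.den y - B.den x) / (B.den x * B.den y)| := by
        congr 1
        field_simp
        ring
    _ ≤ |u - v| / B.den x + |v| * |B.den y - B.den x| / (B.den x * B.den y) := by
        refine (abs_add_le _ _).trans_eq ?_
        rw [abs_div, abs_div, abs_mul, abs_of_pos hDx, abs_of_pos (mul_pos hDx hDy)]
    _ ≤ 2 * dist x y / B.s + 1 * (4 * B.s * dist x y) / (B.s * B.s) := by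
        gcongr
        exacts [s_le_den hm hx, hB.abs_den_sub_den_le, s_le_den hm hx, s_le_den hm hy]
    _ = 6 * dist x y / B.s := by
        field_simp
        ring
    _ ≤ dist x y / 2 := by
        rw [div_le_div_iff₀ hs two_pos]
        nlinarith [dist_nonneg (x := x) (y := y)]

lemma IsBalanced.lipschitzOnWith_act (hB : B.IsBalanced m) (hm : 100000 ≤ m) :
    LipschitzOnWith (1 / 2) B.act (region m) := by
  refine LipschitzOnWith.of_dist_le_mul fun x hx y hy => ?_
  have hs := hB.s_pos hm
  have hz := snd_le_of_mem_region hm hy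
  have ⟨⟨ht₀, ht⟩, hz₀, _⟩ := hy
  have fst_le : |x.1 - y.1| ≤ dist x y := (Real.dist_eq _ _).symm.trans_le (le_max_left _ _)
  have snd_le : |x.2 - y.2| ≤ dist x y := (Real.dist_eq _ _).symm.trans_le (le_max_right _ _)
  have hd := dist_nonneg (x := x) (y := y)
  have half : ((1 / 2 : ℝ≥0) : ℝ) * dist x y = dist x y / 2 := by push_cast; ring
  rw [half, Prod.dist_eq, max_le_iff, Real.dist_eq, Real.dist_eq]
  constructor
  · rw [act_fst_eq hs.ne' (hB.den_pos hm hx).ne', act_fst_eq hs.ne' (hB.den_pos hm hy).ne',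
      add_sub_add_left_eq_sub, div_mul_eq_div_div_swap, div_mul_eq_div_div_swap, ← sub_div,
      abs_div, abs_of_pos hs]
    refine (div_le_self (abs_nonneg _) (by linarith [hB.three_mul_le_s])).trans ?_
    exact hB.abs_div_den_sub_le hm hx hy (abs_le.2 ⟨by linarith, by linarith⟩) (by linarith)
  · refine hB.abs_div_den_sub_le hm hx hy (abs_le.2 ⟨by linarith, by linarith⟩) ?_
    calc |x.1 - x.2 - (y.1 - y.2)| = |(x.1 - y.1) - (x.2 - y.2)| := by ring_nf
      _ ≤ |x.1 - y.1| + |x.2 - y.2| := abs_sub _ _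
      _ ≤ 2 * dist x y := by linarith

/-- The first coordinate of the row vector `(κ, -η)` times the matrix `!![p, q; r, s]`. -/
def rowFst (B : Block) (κ η : ℝ) : ℝ := κ * B.p - η * B.r

/-- The second coordinate of the row vector `(κ, -η)` times the matrix `!![p, q; r, s]`. -/
def rowSnd (B : Block) (κ η : ℝ) : ℝ := κ * B.q - η * B.s

variable {κ η δ : ℝ}

lemma affine_act_mul_den (hx : B.den x ≠ 0) :
    (κ * (B.act x).1 - (B.act x).2 - η) * B.den x =
      B.rowFst κ η * x.1 + B.rowSnd κ η * (1 + x.1 - 2 * x.2) - (x.1 - x.2) := by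
  rw [act, sub_mul, sub_mul, mul_assoc, div_mul_cancel₀ _ hx, div_mul_cancel₀ _ hx]
  unfold den rowFst rowSnd
  ring

lemma s_mul_rowFst (B : Block) (κ η : ℝ) :
    B.s * B.rowFst κ η = B.r * B.rowSnd κ η + κ := by
  unfold rowFst rowSnd
  linear_combination κ * B.det_real

lemma IsBalanced.s_mul_snd_le (hB : B.IsBalanced m) (hm : 100000 ≤ m) (hx : x ∈ region m) :
    B.s * x.2 ≤ 10 := by
  have : 0 < m := by linarith
  calc B.s * x.2 ≤ 40 * m * (1 / (4 * m)) := by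
        gcongr
        exacts [hx.2.1, hB.s_le, hx.2.2]
    _ = 10 := by field_simp; norm_num

end Block

/-- The points at vertical distance at most `δ` from the line `z = κ t - η`. -/
def strip (κ η δ : ℝ) : Set (ℝ × ℝ) := {x | |κ * x.1 - x.2 - η| ≤ δ}

namespace Block

variable {B : Block} {m κ η δ : ℝ} {x y : ℝ × ℝ}

lemma IsBalanced.abs_rowSnd_mul_den_sub_le (hB : B.IsBalanced m) (hm : 100000 ≤ m)
    (hκ : κ ∈ Set.Icc (1 / 2) 3) (hδ : 100000 * m * δ ≤ 1) (hx : x ∈ region m)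
    (hstrip : B.act x ∈ strip κ η δ) :
    |B.rowSnd κ η * B.den x - B.s * x.1| ≤ B.den x / 2000 := by
  have hs := hB.s_pos hm
  have hD := hB.den_pos hm hx
  have hsD : B.s ≤ B.den x := s_le_den hm hx
  have : 0 ≤ δ := (abs_nonneg _).trans hstrip
  set ℓ := κ * (B.act x).1 - (B.act x).2 - η with hℓ
  have identity : B.rowSnd κ η * B.den x - B.s * x.1 =
      B.s * ℓ * B.den x - (κ * x.1 + B.s * x.2) := by
    rw [mul_assoc, hℓ, affine_act_mul_den hD.ne']
    unfold den
    linear_combination -x.1 * B.s_mul_rowFst κ η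
  have main_term : |B.s * ℓ * B.den x| ≤ B.den x / 2500 := by
    rw [abs_mul, abs_mul, abs_of_pos hs, abs_of_pos hD]
    calc B.s * |ℓ| * B.den x ≤ 40 * m * δ * B.den x := by
          gcongr
          exacts [hB.s_le, hstrip]
      _ ≤ 1 / 2500 * B.den x := by gcongr; linarith
      _ = B.den x / 2500 := by ring
  have error_term : |κ * x.1 + B.s * x.2| ≤ 12 := by
    have ht₀ : 0 ≤ x.1 := by linarith [hx.1.1]
    have hκ₀ : 0 ≤ κ := by linarith [hκ.1]
    have hκt : κ * x.1 ≤ 3 * (3 / 5) := mul_le_mul hκ.2 hx.1.2 ht₀ (by norm_num)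
    rw [abs_of_nonneg (add_nonneg (mul_nonneg hκ₀ ht₀) (mul_nonneg hs.le hx.2.1))]
    linarith [hB.s_mul_snd_le hm hx]
  rw [identity]
  refine (abs_sub _ _).trans ?_
  linarith [hB.three_mul_le_s]

lemma one_sub_two_mul_rowSnd_mul_den (B : Block) (κ η : ℝ) (x : ℝ × ℝ) :
    (1 - 2 * B.rowSnd κ η) * B.den x = B.r * x.1 + B.s - B.s * x.1 - 2 * (B.s * x.2) -
      2 * (B.rowSnd κ η * B.den x - B.s * x.1) := by
  unfold den
  ring

lemma one_sub_rowFst_sub_rowSnd_mul_den (κ η : ℝ) (x : ℝ × ℝ) (hs : (B.s : ℝ) ≠ 0) :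
    (1 - B.rowFst κ η - B.rowSnd κ η) * B.den x = B.s - 2 * (B.s * x.2) -
      (1 + B.r / B.s) * (B.rowSnd κ η * B.den x - B.s * x.1) - κ * (B.den x / B.s) := by
  have rowFst_eq : B.rowFst κ η = B.r / B.s * B.rowSnd κ η + κ / B.s := by
    field_simp
    rw [mul_comm, s_mul_rowFst]
  rw [rowFst_eq]
  unfold den
  field_simp
  ring

lemma IsBalanced.row_bounds (hB : B.IsBalanced m) (hm : 100000 ≤ m)
    (hκ : κ ∈ Set.Icc (1 / 2) 3) (hx : x ∈ region m)
    (hrow : |B.rowSnd κ η * B.den x - B.s * x.1| ≤ B.den x / 2000) :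
    0 ≤ B.rowSnd κ η ∧ 1 / 10 ≤ 1 - 2 * B.rowSnd κ η ∧
      1 / 2 * (1 - 2 * B.rowSnd κ η) ≤ 1 - B.rowFst κ η - B.rowSnd κ η ∧
      1 - B.rowFst κ η - B.rowSnd κ η ≤ 3 * (1 - 2 * B.rowSnd κ η) := by
  have hs := hB.s_pos hm
  have hs_large : 300000 ≤ (B.s : ℝ) := by linarith [hB.three_mul_le_s]
  have hD := hB.den_pos hm hx
  have hD_le := hB.den_le hx
  have hsz := hB.s_mul_snd_le hm hx
  have : 0 ≤ B.s * x.2 := mul_nonneg hs.le hx.2.1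
  have ht₀ : 0 ≤ x.1 := by linarith [hx.1.1]
  have hrt₀ : 0 ≤ B.r * x.1 := by positivity
  have hrt : B.r * x.1 ≤ B.s * x.1 := by gcongr; exact hB.r_lt_s.le
  have hst₀ : B.s * (1 / 4) ≤ B.s * x.1 := by gcongr; exact hx.1.1
  have hst : B.s * x.1 ≤ B.s * (3 / 5) := by gcongr; exact hx.1.2
  obtain ⟨hE₀, hE⟩ := abs_le.1 hrow
  set E := B.rowSnd κ η * B.den x - B.s * x.1 with hE_def
  have snd_mul_den := one_sub_two_mul_rowSnd_mul_den B κ η x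
  have fst_mul_den := one_sub_rowFst_sub_rowSnd_mul_den κ η x hs.ne'
  rw [← hE_def] at snd_mul_den fst_mul_den
  have weighted_error : |(1 + B.r / B.s) * E| ≤ 2 * (B.den x / 2000) := by
    rw [abs_mul, abs_of_nonneg (by positivity)]
    gcongr
    linarith [(div_le_one hs).2 hB.r_le_s]
  have hκD : κ * (B.den x / B.s) ≤ 3 * (11 / 5) :=
    mul_le_mul hκ.2 ((div_le_iff₀ hs).2 hD_le) (by positivity) (by norm_num)
  have hκD₀ : 0 ≤ κ * (B.den x / B.s) := mul_nonneg (by linarith [hκ.1]) (by positivity)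
  obtain ⟨hwE₀, hwE⟩ := abs_le.1 weighted_error
  refine ⟨nonneg_of_mul_nonneg_left (b := B.den x) ?_ hD, ?_, ?_, ?_⟩
  · linarith
  all_goals
    refine le_of_mul_le_mul_right ?_ hD
    linarith

lemma IsBalanced.exists_strip_superset_preimage (hB : B.IsBalanced m) (hm : 100000 ≤ m)
    (hκ : κ ∈ Set.Icc (1 / 2) 3) (hδ : 100000 * m * δ ≤ 1)
    (hne : (region m ∩ B.act ⁻¹' strip κ η δ).Nonempty) :
    ∃ κ' ∈ Set.Icc (1 / 2 : ℝ) 3, ∃ η' ≥ 0,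
      region m ∩ B.act ⁻¹' strip κ η δ ⊆ strip κ' η' (1000 * m * δ) := by
  obtain ⟨x, hx, hxstrip⟩ := hne
  obtain ⟨snd_nonneg, le_snd, le_fst, fst_le⟩ :=
    hB.row_bounds hm hκ hx (hB.abs_rowSnd_mul_den_sub_le hm hκ hδ hx hxstrip)
  have hδ₀ : 0 ≤ δ := (abs_nonneg _).trans hxstrip
  set e₁ := B.rowFst κ η with he₁
  set e₂ := B.rowSnd κ η with he₂
  have hpos : 0 < 1 - 2 * e₂ := by linarith
  refine ⟨(1 - e₁ - e₂) / (1 - 2 * e₂), ⟨(le_div_iff₀ hpos).2 le_fst, (div_le_iff₀ hpos).2 fst_le⟩,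
    e₂ / (1 - 2 * e₂), div_nonneg snd_nonneg hpos.le, ?_⟩
  rintro y ⟨hy, hystrip⟩
  have hD := hB.den_pos hm hy
  have pullback : (1 - e₁ - e₂) / (1 - 2 * e₂) * y.1 - y.2 - e₂ / (1 - 2 * e₂) =
      -((κ * (B.act y).1 - (B.act y).2 - η) * B.den y) / (1 - 2 * e₂) := by
    rw [affine_act_mul_den hD.ne', ← he₁, ← he₂, div_mul_eq_mul_div, eq_div_iff hpos.ne', sub_mul,
      sub_mul, div_mul_cancel₀ _ hpos.ne', div_mul_cancel₀ _ hpos.ne']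
    ring
  rw [strip, Set.mem_ofPred_eq, pullback, abs_div, abs_neg, abs_mul, abs_of_pos hD, abs_of_pos hpos,
    div_le_iff₀ hpos]
  calc |κ * (B.act y).1 - (B.act y).2 - η| * B.den y ≤ δ * (11 / 5 * (40 * m)) := by
        gcongr
        · exact hystrip
        · exact (hB.den_le hy).trans (by linarith [hB.s_le])
    _ ≤ 1000 * m * δ * (1 / 10) := by nlinarith
    _ ≤ 1000 * m * δ * (1 - 2 * e₂) := by gcongr

lemma IsBalanced.abs_fst_sub_fst_le (hB : B.IsBalanced m) (hm : 100000 ≤ m) {θ L : ℝ}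
    (hη : 0 ≤ η) (hδL : δ ≤ L)
    (hx : x ∈ region m) (hxstrip : x ∈ strip κ η (1000 * m * δ)) (hxθ : |(B.act x).1 - θ| ≤ L)
    (hy : y ∈ region m) (hystrip : y ∈ strip κ η (1000 * m * δ)) (hyθ : |(B.act y).1 - θ| ≤ L) :
    |x.1 - y.1| ≤ 20000 * m ^ 2 * L := by
  have hs := hB.s_pos hm
  have hDx := hB.den_pos hm hx
  have hDy := hB.den_pos hm hy
  have hDx_le : B.den x ≤ 88 * m := (hB.den_le hx).trans (by linarith [hB.s_le])
  have hDy_le : B.den y ≤ 88 * m := (hB.den_le hy).trans (by linarith [hB.s_le])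
  have hL : 0 ≤ L := (abs_nonneg _).trans hxθ
  have images_near : |(B.act x).1 - (B.act y).1| ≤ 2 * L := by
    rw [abs_sub_comm] at hyθ
    exact (abs_sub_le _ θ _).trans (by linarith)
  set u := κ * x.1 - x.2 - η with hu
  set v := κ * y.1 - y.2 - η with hv
  have identity : (1 + 2 * η) * (x.1 - y.1) =
      ((B.act x).1 - (B.act y).1) * (B.den x * B.den y) - 2 * (x.1 * v - y.1 * u) := by
    rw [act_fst_eq hs.ne' hDx.ne', act_fst_eq hs.ne' hDy.ne', hu, hv]
    field_simp
    unfold den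
    ring
  have cross_le : |2 * (x.1 * v - y.1 * u)| ≤
      2 * (3 / 5 * (1000 * m * L) + 3 / 5 * (1000 * m * L)) := by
    have abs_fst_le : ∀ {z : ℝ × ℝ}, z ∈ region m → |z.1| ≤ 3 / 5 := fun hz =>
      abs_le.2 ⟨by linarith [hz.1.1], hz.1.2⟩
    have widen : ∀ {w : ℝ}, |w| ≤ 1000 * m * δ → |w| ≤ 1000 * m * L := fun hw =>
      hw.trans (by gcongr)
    rw [abs_mul, abs_two]
    gcongr
    refine (abs_sub _ _).trans ?_
    rw [abs_mul, abs_mul]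
    gcongr
    exacts [abs_fst_le hx, widen hystrip, abs_fst_le hy, widen hxstrip]
  calc |x.1 - y.1| ≤ (1 + 2 * η) * |x.1 - y.1| :=
        le_mul_of_one_le_left (abs_nonneg _) (by linarith)
    _ = |((B.act x).1 - (B.act y).1) * (B.den x * B.den y) - 2 * (x.1 * v - y.1 * u)| := by
        rw [← identity, abs_mul, abs_of_nonneg (by linarith : 0 ≤ 1 + 2 * η)]
    _ ≤ 2 * L * (88 * m * (88 * m)) + 2 * (3 / 5 * (1000 * m * L) + 3 / 5 * (1000 * m * L)) := by
        refine (abs_sub _ _).trans (add_le_add ?_ cross_le)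
        rw [abs_mul, abs_of_pos (mul_pos hDx hDy)]
        gcongr
    _ ≤ 20000 * m ^ 2 * L := by nlinarith [mul_nonneg (by linarith : 0 ≤ m) hL]

lemma coprime (B : Block) : Nat.Coprime B.q B.s := by
  refine Nat.isCoprime_iff_coprime.1 ⟨-B.r, B.p, ?_⟩
  have : (B.p * B.s : ℤ) = B.q * B.r + 1 := by exact_mod_cast B.det
  linear_combination this

lemma eq_of_q_eq_of_s_eq {B C : Block} (hB : B.r < B.s) (hC : C.r < C.s) (hq : B.q = C.q)
    (hs : B.s = C.s) : B = C := by
  obtain ⟨p, q, r, s, hdet⟩ := B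
  obtain ⟨p', q', r', s', hdet'⟩ := C
  have coprime : Nat.Coprime s q := (Block.mk p q r s hdet).coprime.symm
  dsimp only at *
  subst hq hs
  have r_modEq : q * r + 1 ≡ q * r' + 1 [MOD s] := by
    rw [← hdet, ← hdet']
    exact (Nat.modEq_zero_iff_dvd.2 ⟨p, mul_comm p s⟩).trans
      (Nat.modEq_zero_iff_dvd.2 ⟨p', mul_comm p' s⟩).symm
  obtain rfl : r = r' :=
    ((r_modEq.add_right_cancel' 1).cancel_left_of_coprime coprime).eq_of_lt_of_lt hB hC
  obtain rfl : p = p' := Nat.eq_of_mul_eq_mul_right (by omega) (hdet.trans hdet'.symm)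
  rfl

lemma exists_of_coprime {q s : ℕ} (hq : 1 < q) (hqs : Nat.Coprime q s) (hs : 0 < s) :
    ∃ B : Block, B.q = q ∧ B.s = s ∧ B.r < s := by
  obtain ⟨p, hp, hmod⟩ := Nat.exists_mul_mod_eq_one_of_coprime hqs.symm hq
  have det : p * s = q * (s * p / q) + 1 := by
    rw [mul_comm p, ← hmod]
    exact (Nat.div_add_mod (s * p) q).symm
  refine ⟨⟨p, q, s * p / q, s, det⟩, rfl, rfl, ?_⟩
  exact (Nat.div_lt_iff_lt_mul (by omega)).2 (Nat.mul_lt_mul_of_pos_left hp hs)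

end Block

/-- The index type of the iterated function system at scale `m`. -/
abbrev BalancedBlock (m : ℝ) := {B : Block // B.IsBalanced m}

namespace BalancedBlock

lemma ext {m : ℝ} {B C : BalancedBlock m} (hq : B.1.q = C.1.q) (hs : B.1.s = C.1.s) : B = C :=
  Subtype.ext (Block.eq_of_q_eq_of_s_eq B.2.r_lt_s C.2.r_lt_s hq hs)

instance (m : ℝ) : Finite (BalancedBlock m) := by
  refine Finite.of_injective (β := Finset.range (⌊40 * m⌋₊ + 1) × Finset.range (⌊40 * m⌋₊ + 1))
    (fun B => ⟨⟨B.1.q, ?_⟩, ⟨B.1.s, ?_⟩⟩) fun B C h => ?_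
  · have : (B.1.q : ℝ) ≤ 40 * m := by
      linarith [B.2.two_mul_q_le, B.2.s_le, B.1.q.cast_nonneg (α := ℝ)]
    exact Finset.mem_range_succ_iff.2 (Nat.le_floor this)
  · exact Finset.mem_range_succ_iff.2 (Nat.le_floor B.2.s_le)
  · simp only [Prod.mk.injEq, Subtype.mk.injEq] at h
    exact ext h.1 h.2

noncomputable instance (m : ℝ) : Fintype (BalancedBlock m) := Fintype.ofFinite _

lemma eight_mul_sq_le_card (m : ℕ) :
    8 * (m : ℝ) ^ 2 ≤ Fintype.card (BalancedBlock m) := by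
  classical
  -- `(q, s) = (a + b, 2 * a + 3 * b)` is a unimodular substitution under which `s ≤ 3 * q` and
  -- `2 * q ≤ s` become `0 ≤ a` and `0 ≤ b`.
  set I := Finset.Ioc 0 (8 * m) with hI
  have covered : {x ∈ I ×ˢ I | Nat.Coprime x.1 x.2} ⊆ I ×ˢ Finset.Ioc 0 m ∪
      Finset.univ.image fun B : BalancedBlock m => (3 * B.1.q - B.1.s, B.1.s - 2 * B.1.q) := by
    rintro ⟨a, b⟩ hab
    simp only [hI, Finset.mem_filter, Finset.mem_product, Finset.mem_Ioc] at hab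
    obtain ⟨⟨⟨ha₀, ha⟩, hb₀, hb⟩, hcoprime⟩ := hab
    simp only [Finset.mem_union, Finset.mem_product, hI, Finset.mem_Ioc, Finset.mem_image,
      Finset.mem_univ, true_and, Prod.mk.injEq]
    refine (le_or_gt b m).imp (fun hbm => ⟨⟨ha₀, ha⟩, hb₀, hbm⟩) fun hmb => ?_
    have coprime : Nat.Coprime (a + b) (2 * a + 3 * b) := by
      rw [show 2 * a + 3 * b = b + 2 * (a + b) by ring, Nat.coprime_add_mul_right_right,
        Nat.coprime_add_self_left]
      exact hcoprime
    obtain ⟨B, hq, hs, hr⟩ := Block.exists_of_coprime (by omega) coprime (by omega)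
    refine ⟨⟨B, ⟨by omega, ?_, ?_, ?_, ?_⟩⟩, by dsimp only; omega, by dsimp only; omega⟩
    all_goals
      rw [hs]
      try rw [hq]
      norm_cast
      omega
  have card_le := (Finset.card_le_card covered).trans ((Finset.card_union_le _ _).trans
    (Nat.add_le_add_left Finset.card_image_le _))
  rw [Finset.card_product, hI, Nat.card_Ioc, Nat.card_Ioc, Nat.sub_zero, Nat.sub_zero,
    Finset.card_univ] at card_le
  have many_coprime := (sq_div_four_le_card_coprime (8 * m)).trans (Nat.cast_le.2 card_le)
  push_cast at many_coprime
  linarith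

lemma ncard_q_sub_mul_s_mem_Icc_le (m : ℕ) (θ : ℝ) :
    ({B : BalancedBlock m | B.1.q - θ * B.1.s ∈ Set.Icc (0 : ℝ) 1}.ncard : ℝ) ≤ 80 * m := by
  classical
  set H := {B : BalancedBlock m | B.1.q - θ * B.1.s ∈ Set.Icc (0 : ℝ) 1}
  have fiber_le : ∀ s ∈ Finset.Ioc 0 (40 * m), #{B ∈ H.toFinset | B.1.s = s} ≤ 2 := by
    intro s _
    rw [← Set.ncard_coe_finset, ← Nat.cast_le (α := ℝ)]
    refine (ncard_le_of_separated (fun B => (B.1.q : ℝ)) one_pos (x := θ * s) (y := θ * s + 1)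
      (by linarith) ?_ ?_).trans_eq (by norm_num)
    · intro B hB
      obtain ⟨hBH, rfl⟩ := Finset.mem_filter.1 hB
      have hBθ := Set.mem_toFinset.1 hBH
      constructor <;> linarith [hBθ.1, hBθ.2]
    · intro B hB C hC hne
      have same_s : B.1.s = C.1.s :=
        (Finset.mem_filter.1 hB).2.trans (Finset.mem_filter.1 hC).2.symm
      have q_ne : (B.1.q - C.1.q : ℤ) ≠ 0 := fun h => hne (ext (by omega) same_s)
      exact_mod_cast Int.one_le_abs q_ne
  have maps : ∀ B ∈ H.toFinset, B.1.s ∈ Finset.Ioc 0 (40 * m) := by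
    intro B _
    rw [Finset.mem_Ioc]
    exact ⟨(Nat.zero_le _).trans_lt B.2.r_lt_s, by exact_mod_cast B.2.s_le⟩
  have card_le := Finset.card_le_mul_card_image_of_maps_to maps 2 fiber_le
  rw [Nat.card_Ioc, Nat.sub_zero, ← Set.ncard_eq_toFinset_card'] at card_le
  have : (H.ncard : ℝ) ≤ (2 * (40 * m) : ℕ) := by exact_mod_cast card_le
  push_cast at this
  linarith

lemma one_div_le_abs_slope_sub_slope {m : ℕ} (hm : 0 < m) {B C : BalancedBlock m} (hne : B ≠ C) :
    1 / (1600 * (m : ℝ) ^ 2) ≤ |B.1.slope - C.1.slope| := by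
  have hsB : (0 : ℝ) < B.1.s := by exact_mod_cast (Nat.zero_le _).trans_lt B.2.r_lt_s
  have hsC : (0 : ℝ) < C.1.s := by exact_mod_cast (Nat.zero_le _).trans_lt C.2.r_lt_s
  have cross_ne : (B.1.q * C.1.s - B.1.s * C.1.q : ℤ) ≠ 0 := by
    intro h
    have cross_eq : B.1.q * C.1.s = B.1.s * C.1.q := by exact_mod_cast sub_eq_zero.1 h
    have q_eq : B.1.q = C.1.q := Nat.dvd_antisymm
      (B.1.coprime.dvd_of_dvd_mul_left (Dvd.intro _ cross_eq))
      (C.1.coprime.dvd_of_dvd_mul_right (Dvd.intro_left _ cross_eq.symm))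
    have s_eq : B.1.s = C.1.s := Nat.dvd_antisymm
      (B.1.coprime.symm.dvd_of_dvd_mul_left (Dvd.intro _ cross_eq.symm))
      (C.1.coprime.symm.dvd_of_dvd_mul_right (Dvd.intro_left _ cross_eq))
    exact hne (ext q_eq s_eq)
  have one_le_cross : (1 : ℝ) ≤ |(B.1.q : ℝ) * C.1.s - B.1.s * C.1.q| := by
    exact_mod_cast Int.one_le_abs cross_ne
  rw [Block.slope, Block.slope, div_sub_div _ _ hsB.ne' hsC.ne', abs_div,
    abs_of_pos (mul_pos hsB hsC)]
  calc 1 / (1600 * (m : ℝ) ^ 2) = 1 / (40 * m * (40 * m)) := by ring_nf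
    _ ≤ |(B.1.q * C.1.s - B.1.s * C.1.q : ℝ)| / (B.1.s * C.1.s) := by
        gcongr
        exacts [B.2.s_le, C.2.s_le]

lemma ncard_slope_near_le {m : ℕ} (hm : 0 < m) (θ : ℝ) :
    ({B : BalancedBlock m | |B.1.slope - θ| ≤ 2 / (m : ℝ) ^ 2}.ncard : ℝ) ≤ 6401 := by
  have : (0 : ℝ) < m := by exact_mod_cast hm
  refine (ncard_le_of_separated (fun B => B.1.slope) (ε := 1 / (1600 * (m : ℝ) ^ 2)) (by positivity)
    (x := θ - 2 / (m : ℝ) ^ 2) (y := θ + 2 / (m : ℝ) ^ 2) ?_ ?_ ?_).trans_eq ?_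
  · linarith [show 0 ≤ 2 / (m : ℝ) ^ 2 by positivity]
  · intro B hB
    rw [Set.mem_ofPred_eq, abs_le] at hB
    constructor <;> linarith
  · exact fun B _ C _ hne => one_div_le_abs_slope_sub_slope hm hne
  · field_simp
    norm_num

end BalancedBlock

section Masses

variable {m : ℕ} {κ η δ α : ℝ}

/-- The iterated function system on the region whose maps are the actions of the balanced
blocks. -/
noncomputable def blockMap (hm : 100000 ≤ (m : ℝ)) (B : BalancedBlock m) : region m → region m :=
  (B.2.mapsTo_region hm).restrict

/-- The part of a strip over the interval of radius `L` about `θ`. -/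
def box (κ η δ θ L : ℝ) : Set (ℝ × ℝ) := strip κ η δ ∩ {x | |x.1 - θ| ≤ L}

lemma measurableSet_strip : MeasurableSet (strip κ η δ) :=
  measurableSet_le (by fun_prop) measurable_const

lemma measurableSet_box (θ L : ℝ) : MeasurableSet (box κ η δ θ L) :=
  measurableSet_strip.inter (measurableSet_le (by fun_prop) measurable_const)

lemma lipschitzWith_blockMap (hm : 100000 ≤ (m : ℝ)) (B : BalancedBlock m) :
    LipschitzWith (1 / 2) (blockMap hm B) :=
  (B.2.lipschitzOnWith_act hm).mapsToRestrict _

lemma ncard_blocks_meeting_strip_le (hm : 100000 ≤ (m : ℝ)) (hκ : κ ∈ Set.Icc (1 / 2) 3)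
    (hδ : 100000 * m * δ ≤ 1) :
    ({B | (blockMap hm B ⁻¹' (Subtype.val ⁻¹' strip κ η δ)).Nonempty}.ncard : ℝ) ≤ 80 * m := by
  refine le_trans ?_ (BalancedBlock.ncard_q_sub_mul_s_mem_Icc_le m (η / κ))
  refine Nat.cast_le.2 (Set.ncard_le_ncard ?_ (Set.toFinite _))
  rintro B ⟨x, hxstrip⟩
  obtain ⟨snd_nonneg, le_snd, -, -⟩ := B.2.row_bounds hm hκ x.2
    (B.2.abs_rowSnd_mul_den_sub_le hm hκ hδ x.2 hxstrip)
  have hκ₀ : 0 < κ := by linarith [hκ.1]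
  have rowSnd_eq : B.1.q - η / κ * B.1.s = B.1.rowSnd κ η / κ := by
    unfold Block.rowSnd
    field_simp
  rw [Set.mem_ofPred_eq, rowSnd_eq]
  exact ⟨div_nonneg snd_nonneg hκ₀.le, (div_le_one hκ₀).2 (by linarith [hκ.1])⟩

lemma ncard_blocks_meeting_box_le (hm : 100000 ≤ (m : ℝ)) {θ L : ℝ} (hL : L ≤ 1 / (m : ℝ) ^ 2) :
    ({B | (blockMap hm B ⁻¹' (Subtype.val ⁻¹' box κ η δ θ L)).Nonempty}.ncard : ℝ) ≤ 6401 := by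
  have hm₀ : 0 < m := by exact_mod_cast (by linarith : (0 : ℝ) < m)
  refine le_trans ?_ (BalancedBlock.ncard_slope_near_le hm₀ θ)
  refine Nat.cast_le.2 (Set.ncard_le_ncard ?_ (Set.toFinite _))
  rintro B ⟨x, -, hxθ⟩
  have near := B.2.abs_act_fst_sub_slope_le hm x.2
  rw [abs_sub_comm] at near
  calc |B.1.slope - θ| ≤ |B.1.slope - (B.1.act x).1| + |(B.1.act x).1 - θ| := abs_sub_le _ _ _
    _ ≤ 1 / (m : ℝ) ^ 2 + 1 / (m : ℝ) ^ 2 := add_le_add near (hxθ.trans hL)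
    _ = 2 / (m : ℝ) ^ 2 := by ring

variable {hm : 100000 ≤ (m : ℝ)} {μ : Measure (region m)} [IsProbabilityMeasure μ]

lemma measureReal_le_of_preimage_blockMap_le (hμ : IsSelfSimilar (blockMap hm) μ)
    {S : Set (ℝ × ℝ)} (hS : MeasurableSet S) {n c : ℝ} (hc : 0 ≤ c)
    (hn : ({B | (blockMap hm B ⁻¹' (Subtype.val ⁻¹' S)).Nonempty}.ncard : ℝ) ≤ n)
    (hle : ∀ B, (blockMap hm B ⁻¹' (Subtype.val ⁻¹' S)).Nonempty →
      μ.real (blockMap hm B ⁻¹' (Subtype.val ⁻¹' S)) ≤ c) :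
    μ.real (Subtype.val ⁻¹' S) ≤ n * c / (8 * (m : ℝ) ^ 2) := by
  have : (0 : ℝ) < m := by linarith
  refine (hμ.measureReal_le (fun B => (lipschitzWith_blockMap hm B).continuous.measurable)
    (measurable_subtype_coe hS) hc hn hle).trans ?_
  have hn₀ : 0 ≤ n := (Nat.cast_nonneg _).trans hn
  gcongr
  exact BalancedBlock.eight_mul_sq_le_card m

lemma measureReal_strip_le (hμ : IsSelfSimilar (blockMap hm) μ) (hα : 0 ≤ α)
    (hmα : 200000 * (1000 * m : ℝ) ^ α ≤ m) (hκ : κ ∈ Set.Icc (1 / 2) 3) (hδ : 0 < δ) :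
    μ.real (Subtype.val ⁻¹' strip κ η δ) ≤ (100000 * m * δ) ^ α := by
  have : (0 : ℝ) < m := by linarith
  refine scale_induction (b := 1000 * m) (δ₀ := 1 / (100000 * m))
    (P := fun δ => ∀ κ ∈ Set.Icc (1 / 2 : ℝ) 3, ∀ η,
      μ.real (Subtype.val ⁻¹' strip κ η δ) ≤ (100000 * m * δ) ^ α)
    (by linarith) ?_ ?_ hδ κ hκ η
  · intro δ hδ κ _ η
    rw [div_le_iff₀' (by positivity)] at hδ
    exact measureReal_le_one.trans (Real.one_le_rpow hδ hα)
  intro δ hδ hδ₀ ih κ hκ η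
  rw [lt_div_iff₀' (by positivity)] at hδ₀
  refine (measureReal_le_of_preimage_blockMap_le hμ (measurableSet_strip (κ := κ) (η := η))
    (c := (100000 * m * (1000 * m * δ)) ^ α) (by positivity)
    (ncard_blocks_meeting_strip_le hm hκ hδ₀.le) ?_).trans ?_
  · rintro B ⟨x, hx⟩
    obtain ⟨κ', hκ', η', -, hsub⟩ :=
      B.2.exists_strip_superset_preimage hm hκ hδ₀.le ⟨x, x.2, hx⟩
    refine le_trans (measureReal_mono fun y hy => ?_) (ih κ' hκ' η')
    exact hsub ⟨y.2, hy⟩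
  · rw [mul_left_comm, Real.mul_rpow (by positivity) (by positivity)]
    calc 80 * m * ((1000 * m) ^ α * (100000 * m * δ) ^ α) / (8 * m ^ 2)
        = 80 * m * (1000 * m : ℝ) ^ α / (8 * m ^ 2) * (100000 * m * δ) ^ α := by ring
      _ ≤ 1 * (100000 * m * δ) ^ α := by
        gcongr
        rw [div_le_one (by positivity)]
        nlinarith
      _ = _ := one_mul _

lemma rpow_mul_sqrt_div_sq_le_one {m α : ℝ} (hm : 0 < m) (hmα : 200000 * (1000 * m) ^ α ≤ m) :
    6401 * (1000 * m) ^ α * √(20000 * m ^ 2) / (8 * m ^ 2) ≤ 1 := by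
  have sqrt_le : √(20000 * m ^ 2) ≤ 200 * m :=
    Real.sqrt_le_iff.2 ⟨by positivity, by nlinarith⟩
  rw [div_le_one (by positivity)]
  calc 6401 * (1000 * m) ^ α * √(20000 * m ^ 2)
      ≤ 6401 * (m / 200000) * (200 * m) := by
        gcongr
        linarith
    _ ≤ 8 * m ^ 2 := by nlinarith

lemma measureReal_box_le (hμ : IsSelfSimilar (blockMap hm) μ) (hα : 0 ≤ α)
    (hmα : 200000 * (1000 * m : ℝ) ^ α ≤ m) (hκ : κ ∈ Set.Icc (1 / 2) 3) {θ L : ℝ} (hδ : 0 < δ)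
    (hδL : δ ≤ L) :
    μ.real (Subtype.val ⁻¹' box κ η δ θ L) ≤ (100000 * m * δ) ^ α * √(m ^ 2 * L) := by
  have hm₀ : (0 : ℝ) < m := by linarith
  refine scale_induction (b := 20000 * (m : ℝ) ^ 2) (δ₀ := 1 / (m : ℝ) ^ 2)
    (P := fun L => ∀ κ ∈ Set.Icc (1 / 2 : ℝ) 3, ∀ η θ δ, 0 < δ → δ ≤ L →
      μ.real (Subtype.val ⁻¹' box κ η δ θ L) ≤ (100000 * m * δ) ^ α * √(m ^ 2 * L))
    (by nlinarith) ?_ ?_ (hδ.trans_le hδL) κ hκ η θ δ hδ hδL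
  · intro L hL κ hκ η θ δ hδ hδL
    rw [div_le_iff₀' (by positivity)] at hL
    refine (measureReal_mono fun x hx => hx.1).trans
      ((measureReal_strip_le hμ hα hmα hκ hδ).trans ?_)
    exact le_mul_of_one_le_right (by positivity) (Real.one_le_sqrt.2 hL)
  intro L hL hL₀ ih κ hκ η θ δ hδ hδL
  have hδ₀ : 100000 * m * δ ≤ 1 := by
    rw [lt_div_iff₀' (by positivity)] at hL₀
    calc 100000 * m * δ ≤ m * m * L := by gcongr
      _ ≤ 1 := by rw [← sq]; exact hL₀.le
  refine (measureReal_le_of_preimage_blockMap_le hμ (measurableSet_box θ L)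
    (c := (100000 * m * (1000 * m * δ)) ^ α * √(m ^ 2 * (20000 * m ^ 2 * L))) (by positivity)
    (ncard_blocks_meeting_box_le hm hL₀.le) ?_).trans ?_
  · rintro B ⟨x, hxstrip, hxθ⟩
    obtain ⟨κ', hκ', η', hη', hsub⟩ :=
      B.2.exists_strip_superset_preimage hm hκ hδ₀ ⟨x, x.2, hxstrip⟩
    refine le_trans (measureReal_mono fun y hy => ?_)
      (ih κ' hκ' η' x.1.1 (1000 * m * δ) (by positivity) ?_)
    · have hystrip := hsub ⟨y.2, hy.1⟩
      exact ⟨hystrip, B.2.abs_fst_sub_fst_le hm hη' hδL y.2 hystrip hy.2 x.2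
        (hsub ⟨x.2, hxstrip⟩) hxθ⟩
    · gcongr
      · norm_num
      · nlinarith
  · rw [mul_left_comm (100000 * _), Real.mul_rpow (by positivity) (by positivity),
      mul_left_comm (_ ^ 2), Real.sqrt_mul (by positivity)]
    calc 6401 * ((1000 * m) ^ α * (100000 * m * δ) ^ α *
          (√(20000 * m ^ 2) * √(m ^ 2 * L))) / (8 * m ^ 2)
        = 6401 * (1000 * m : ℝ) ^ α * √(20000 * m ^ 2) / (8 * m ^ 2) *
          ((100000 * m * δ) ^ α * √(m ^ 2 * L)) := by ring
      _ ≤ 1 * ((100000 * m * δ) ^ α * √(m ^ 2 * L)) := by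
        gcongr
        exact rpow_mul_sqrt_div_sq_le_one hm₀ hmα
      _ = _ := one_mul _

end Masses

section Words

lemma Aw_cons (i : Fin 3) (w : List (Fin 3)) : Aw (i :: w) = A i * Aw w := by
  simp only [Aw, List.map_cons, List.prod_cons]

lemma Aw_append (u w : List (Fin 3)) : Aw (u ++ w) = Aw u * Aw w := by
  simp only [Aw, List.map_append, List.prod_append]

/-- The matrix with the given upper left corner and last row `(0, 0, 1)` that fixes the vector
`(-1, -1, 1)`. As `A 0` and `A 1` fix this vector too, their products are of this form. -/
def corner (p q r s : ℝ) : M3 := !![p, q, p + q - 1; r, s, r + s - 1; 0, 0, 1]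

lemma A_zero_mul_corner (p q r s : ℝ) :
    A 0 * corner p q r s = corner (p + r) (q + s) r s := by
  simp only [A, corner, Matrix.mul_fin_three]
  ring_nf

lemma A_one_mul_corner (p q r s : ℝ) :
    A 1 * corner p q r s = corner p q (p + r) (q + s) := by
  simp only [A, corner, Matrix.mul_fin_three]
  ring_nf

lemma rows_comparable_or_one_of_det_eq_one {p q r s : ℕ} (h : p * s = q * r + 1) :
    (r ≤ p ∧ s ≤ q) ∨ (p ≤ r ∧ q ≤ s) ∨ (p = 1 ∧ q = 0 ∧ r = 0 ∧ s = 1) := by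
  rcases le_or_gt p r with hpr | hrp
  · rcases le_or_gt q s with hqs | hsq
    · exact Or.inr (Or.inl ⟨hpr, hqs⟩)
    · nlinarith
  · rcases le_or_gt s q with hsq | hqs
    · exact Or.inl ⟨hrp.le, hsq⟩
    · have : q = 0 := by nlinarith
      have : r = 0 := by nlinarith
      subst_vars
      right
      right
      simpa using h

lemma exists_word_eq_corner (p q r s : ℕ) (h : p * s = q * r + 1) :
    ∃ w, Aw w = corner p q r s := by
  induction hn : p + q + r + s using Nat.strong_induction_on generalizing p q r s with
  | _ n ih =>
    rcases rows_comparable_or_one_of_det_eq_one h with ⟨hr, hs⟩ | ⟨hp, hq⟩ | ⟨rfl, rfl, rfl, rfl⟩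
    · obtain ⟨p, rfl⟩ := Nat.exists_eq_add_of_le' hr
      obtain ⟨q, rfl⟩ := Nat.exists_eq_add_of_le' hs
      have pos : 0 < r + s := by
        by_contra! h0
        obtain ⟨rfl, rfl⟩ : r = 0 ∧ s = 0 := by omega
        simp at h
      obtain ⟨w, hw⟩ := ih _ (by omega) p q r s (by linarith) rfl
      exact ⟨0 :: w, by rw [Aw_cons, hw, A_zero_mul_corner, Nat.cast_add, Nat.cast_add]⟩
    · obtain ⟨r, rfl⟩ := Nat.exists_eq_add_of_le hp
      obtain ⟨s, rfl⟩ := Nat.exists_eq_add_of_le hq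
      have pos : 0 < p + q := by
        by_contra! h0
        obtain ⟨rfl, rfl⟩ : p = 0 ∧ q = 0 := by omega
        simp at h
      obtain ⟨w, hw⟩ := ih _ (by omega) p q r s (by linarith) rfl
      exact ⟨1 :: w, by rw [Aw_cons, hw, A_one_mul_corner, Nat.cast_add, Nat.cast_add]⟩
    · exact ⟨[], by simp [Aw, corner, Matrix.one_fin_three]⟩

end Words

section Cones

variable {v : Fin 3 → ℝ} {n : ℕ}

lemma omega3_smul (c : ℝ) (v : Fin 3 → ℝ) : omega3 (c • v) = c * omega3 v := by
  simp only [omega3, Pi.smul_apply, smul_eq_mul]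
  ring

/-- The nonzero vectors with nonnegative coordinates. -/
def posCone : Set (Fin 3 → ℝ) := {v | 0 ≤ v ∧ 0 < omega3 v}

lemma smul_mem_posCone {c : ℝ} (hc : 0 < c) (hv : v ∈ posCone) : c • v ∈ posCone :=
  ⟨smul_nonneg hc.le hv.1, by rw [omega3_smul]; exact mul_pos hc hv.2⟩

lemma apply_le_omega3 (hv : 0 ≤ v) (i : Fin 3) : v i ≤ omega3 v := by
  have h₀ : 0 ≤ v 0 := hv 0
  have h₁ : 0 ≤ v 1 := hv 1
  have h₂ : 0 ≤ v 2 := hv 2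
  unfold omega3
  fin_cases i <;> dsimp only [Fin.reduceFinMk, Fin.zero_eta, Fin.mk_one] <;> linarith

lemma A_mulVec_apply (i j : Fin 3) (v : Fin 3 → ℝ) :
    (A i *ᵥ v) j = if j = i then omega3 v else v j := by
  fin_cases i <;> fin_cases j <;>
    simp [A, omega3, Matrix.mulVec, dotProduct, Fin.sum_univ_three]

lemma A_mulVec_mem_posCone (i : Fin 3) (hv : v ∈ posCone) : A i *ᵥ v ∈ posCone := by
  have nonneg : 0 ≤ A i *ᵥ v := by
    intro j
    rw [A_mulVec_apply]
    split_ifs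
    exacts [hv.2.le, hv.1 j]
  refine ⟨nonneg, hv.2.trans_le ?_⟩
  calc omega3 v = (A i *ᵥ v) i := by rw [A_mulVec_apply, if_pos rfl]
    _ ≤ omega3 (A i *ᵥ v) := apply_le_omega3 nonneg i

lemma Aw_mulVec_mem_posCone (w : List (Fin 3)) (hv : v ∈ posCone) : Aw w *ᵥ v ∈ posCone := by
  induction w with
  | nil => simpa [Aw] using hv
  | cons i w ih =>
    rw [Aw_cons, ← Matrix.mulVec_mulVec]
    exact A_mulVec_mem_posCone i ih

/-- The transposition of the first and the third letter. -/
def tau : Equiv.Perm (Fin 3) := Equiv.swap 0 2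

lemma omega3_comp_tau (v : Fin 3 → ℝ) : omega3 (v ∘ tau) = omega3 v := by
  change v 2 + v 1 + v 0 = v 0 + v 1 + v 2
  ring

lemma comp_tau_mem_posCone (hv : v ∈ posCone) : v ∘ tau ∈ posCone :=
  ⟨fun i => hv.1 (tau i), hv.2.trans_eq (omega3_comp_tau v).symm⟩

lemma A_tau_mulVec_comp_tau (i : Fin 3) (v : Fin 3 → ℝ) :
    A (tau i) *ᵥ (v ∘ tau) = (A i *ᵥ v) ∘ tau := by
  ext j
  rw [A_mulVec_apply, omega3_comp_tau, Function.comp_apply, Function.comp_apply, A_mulVec_apply]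
  exact if_congr Equiv.swap_apply_eq_iff.symm rfl rfl

lemma Aw_map_tau_mulVec_comp_tau (w : List (Fin 3)) (v : Fin 3 → ℝ) :
    Aw (w.map tau) *ᵥ (v ∘ tau) = (Aw w *ᵥ v) ∘ tau := by
  induction w with
  | nil => simp [Aw]
  | cons i w ih =>
    rw [List.map_cons, Aw_cons, Aw_cons, ← Matrix.mulVec_mulVec, ih, A_tau_mulVec_comp_tau,
      Matrix.mulVec_mulVec]

/-- The cone over the union of the simplices of level `n` in the construction of the gasket. -/
def levelCone (n : ℕ) : Set (Fin 3 → ℝ) :=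
  {v | ∃ w : List (Fin 3), w.length = n ∧ ∃ y ∈ posCone, Aw w *ᵥ y = v}

lemma mem_levelCone_zero (hv : v ∈ posCone) : v ∈ levelCone 0 :=
  ⟨[], rfl, v, hv, by simp [Aw]⟩

lemma smul_mem_levelCone {c : ℝ} (hc : 0 < c) (hv : v ∈ levelCone n) : c • v ∈ levelCone n := by
  obtain ⟨w, hw, y, hy, rfl⟩ := hv
  exact ⟨w, hw, c • y, smul_mem_posCone hc hy, Matrix.mulVec_smul _ _ _⟩

lemma comp_tau_mem_levelCone (hv : v ∈ levelCone n) : v ∘ tau ∈ levelCone n := by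
  obtain ⟨w, hw, y, hy, rfl⟩ := hv
  exact ⟨w.map tau, by rw [List.length_map, hw], y ∘ tau, comp_tau_mem_posCone hy,
    Aw_map_tau_mulVec_comp_tau w y⟩

lemma Aw_mulVec_mem_levelCone_succ {u : List (Fin 3)} (hu : u ≠ []) (hv : v ∈ levelCone n) :
    Aw u *ᵥ v ∈ levelCone (n + 1) := by
  obtain ⟨w, hw, y, hy, rfl⟩ := hv
  have hu := List.length_pos_iff.2 hu
  refine ⟨(u ++ w).take (n + 1), ?_, Aw ((u ++ w).drop (n + 1)) *ᵥ y,
    Aw_mulVec_mem_posCone _ hy, ?_⟩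
  · rw [List.length_take, List.length_append]
    omega
  · rw [Matrix.mulVec_mulVec, ← Aw_append, List.take_append_drop, Aw_append, Matrix.mulVec_mulVec]

/-- The radial projection onto the simplex. -/
noncomputable def normalize (v : Fin 3 → ℝ) : E3 := toE ((omega3 v)⁻¹ • v)

lemma normalize_apply (v : Fin 3 → ℝ) (i : Fin 3) : normalize v i = (omega3 v)⁻¹ * v i := rfl

lemma normalize_mem_simplex (hv : v ∈ posCone) : normalize v ∈ simplex := by
  refine ⟨fun i => mul_nonneg (inv_nonneg.2 hv.2.le) (hv.1 i), ?_⟩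
  change omega3 ((omega3 v)⁻¹ • v) = 1
  rw [omega3_smul, inv_mul_cancel₀ hv.2.ne']

lemma fmap_normalize (w : List (Fin 3)) (hv : v ∈ posCone) :
    fmap w (normalize v) = normalize (Aw w *ᵥ v) := by
  change toE ((omega3 (Aw w *ᵥ (omega3 v)⁻¹ • v))⁻¹ • Aw w *ᵥ (omega3 v)⁻¹ • v) = _
  rw [Matrix.mulVec_smul, omega3_smul, smul_smul, _root_.mul_inv_rev,
    inv_mul_cancel_right₀ (inv_ne_zero hv.2.ne'), normalize]

lemma normalize_mem_gasket (hv : ∀ n, v ∈ levelCone n) : normalize v ∈ gasket := by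
  refine Set.mem_iInter.2 fun n => ?_
  obtain ⟨w, hw, y, hy, rfl⟩ := hv (n + 1)
  exact Set.mem_biUnion hw ⟨normalize y, normalize_mem_simplex hy, fmap_normalize w hy⟩

end Cones

section Chart

variable {m : ℕ} {x : ℝ × ℝ}

/-- A vector in the direction with chart coordinates `x`. -/
def bary (x : ℝ × ℝ) : Fin 3 → ℝ := ![x.1 - x.2, 1 - x.2, x.2]

lemma bary_mem_posCone (hm : 100000 ≤ (m : ℝ)) (hx : x ∈ region m) : bary x ∈ posCone := by
  have hz := Block.snd_le_of_mem_region hm hx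
  obtain ⟨⟨ht, -⟩, hz₀, -⟩ := hx
  constructor
  · intro i
    fin_cases i <;> simp [bary] <;> linarith
  · simp only [omega3, bary, Matrix.cons_val]
    linarith

lemma corner_mulVec (p q r s a b c : ℝ) :
    corner p q r s *ᵥ ![a, b, c] =
      ![p * a + q * b + (p + q - 1) * c, r * a + s * b + (r + s - 1) * c, c] := by
  ext i
  fin_cases i <;> simp [corner, Matrix.mulVec, add_assoc]

lemma bary_comp_tau (x : ℝ × ℝ) : bary x ∘ tau = ![x.2, 1 - x.2, x.1 - x.2] := by
  ext i
  fin_cases i <;> rfl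

lemma corner_mulVec_bary_comp_tau (B : Block) (hx : B.den x ≠ 0) :
    corner B.p B.q B.r B.s *ᵥ (bary x ∘ tau) = B.den x • bary (B.act x) := by
  have den_mul_fst : B.den x * (B.act x).1 = B.p * x.1 + B.q * (1 + x.1 - 2 * x.2) :=
    mul_div_cancel₀ _ hx
  have den_mul_snd : B.den x * (B.act x).2 = x.1 - x.2 := mul_div_cancel₀ _ hx
  have den_eq : B.den x = B.r * x.1 + B.s * (1 + x.1 - 2 * x.2) := rfl
  rw [bary_comp_tau, corner_mulVec, bary, Matrix.smul_vec3]
  simp only [smul_eq_mul, mul_sub, den_mul_fst, den_mul_snd, mul_one]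
  rw [den_eq]
  ring_nf

lemma word_ne_nil_of_Aw_eq_corner {B : Block} (hB : B.IsBalanced m) (hm : 100000 ≤ (m : ℝ))
    {w : List (Fin 3)} (hw : Aw w = corner B.p B.q B.r B.s) : w ≠ [] := by
  rintro rfl
  have s_eq : (1 : ℝ) = B.s := by simpa [Aw, corner] using congrFun (congrFun hw 1) 1
  linarith [hB.three_mul_le_s]

lemma bary_act_mem_levelCone_succ {B : Block} (hB : B.IsBalanced m) (hm : 100000 ≤ (m : ℝ))
    (hx : x ∈ region m) {n : ℕ} (hn : bary x ∈ levelCone n) :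
    bary (B.act x) ∈ levelCone (n + 1) := by
  have hD := hB.den_pos hm hx
  obtain ⟨w, hw⟩ := exists_word_eq_corner B.p B.q B.r B.s B.det
  rw [← inv_smul_smul₀ hD.ne' (bary (B.act x)), ← corner_mulVec_bary_comp_tau B hD.ne', ← hw]
  exact smul_mem_levelCone (inv_pos.2 hD) (Aw_mulVec_mem_levelCone_succ
    (word_ne_nil_of_Aw_eq_corner hB hm hw) (comp_tau_mem_levelCone hn))

lemma normalize_bary_mem_gasket (hm : 100000 ≤ (m : ℝ)) {Λ : Set (region m)}
    (hΛ : ∀ x ∈ Λ, ∃ B, ∃ y ∈ Λ, blockMap hm B y = x) {x : region m} (hx : x ∈ Λ) :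
    normalize (bary x) ∈ gasket := by
  refine normalize_mem_gasket fun n => ?_
  induction n generalizing x with
  | zero => exact mem_levelCone_zero (bary_mem_posCone hm x.2)
  | succ n ih =>
    obtain ⟨B, y, hy, rfl⟩ := hΛ x hx
    exact bary_act_mem_levelCone_succ B.2 hm y.2 (ih hy)

/-- The chart of the plane of directions inverse to `bary`. -/
noncomputable def chart (v : E3) : ℝ × ℝ := ((v 0 + v 2) / (v 1 + v 2), v 2 / (v 1 + v 2))

lemma chart_normalize_bary (hx : omega3 (bary x) ≠ 0) : chart (normalize (bary x)) = x := by
  rw [chart, normalize_apply, normalize_apply, normalize_apply, ← mul_add, ← mul_add,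
    mul_div_mul_left _ _ (inv_ne_zero hx), mul_div_mul_left _ _ (inv_ne_zero hx)]
  simp [bary]

lemma dimH_le_dimH_gasket (hm : 100000 ≤ (m : ℝ)) {Λ : Set (region m)}
    (hΛ : ∀ x ∈ Λ, ∃ B, ∃ y ∈ Λ, blockMap hm B y = x) : dimH Λ ≤ dimH gasket := by
  set U : Set E3 := {v | 0 < v 1 + v 2} with hU
  have convex : Convex ℝ U :=
    convex_halfSpace_gt (f := fun v : E3 => v 1 + v 2)
      ⟨fun v w => by simp only [PiLp.add_apply]; ring, fun c v => by simp [mul_add]⟩ 0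
  have smooth : ContDiffOn ℝ 1 chart U := by
    have ne (v : E3) (hv : v ∈ U) : v 1 + v 2 ≠ 0 := ne_of_gt hv
    have coord (i : Fin 3) : ContDiffOn ℝ 1 (fun v : E3 => v i) U := by fun_prop
    exact (((coord 0).add (coord 2)).div ((coord 1).add (coord 2)) ne).prodMk
      ((coord 2).div ((coord 1).add (coord 2)) ne)
  have subset : Subtype.val '' Λ ⊆ chart '' (gasket ∩ U) := by
    rintro _ ⟨x, hx, rfl⟩
    have pos := (bary_mem_posCone hm x.2).2
    refine ⟨_, ⟨normalize_bary_mem_gasket hm hΛ hx, ?_⟩, chart_normalize_bary pos.ne'⟩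
    rw [hU, Set.mem_ofPred_eq, normalize_apply, normalize_apply, ← mul_add]
    exact mul_pos (inv_pos.2 pos) (by simp [bary])
  calc dimH Λ = dimH (Subtype.val '' Λ) := (isometry_subtype_coe.dimH_image Λ).symm
    _ ≤ dimH (chart '' (gasket ∩ U)) := dimH_mono subset
    _ ≤ dimH (gasket ∩ U) := smooth.dimH_image_le convex Set.inter_subset_right
    _ ≤ dimH gasket := dimH_mono Set.inter_subset_left

end Chart

section Dimension

variable {m : ℕ}

instance : CompleteSpace (region m) :=
  (isClosed_Icc.prod isClosed_Icc).completeSpace_coe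

instance : Nonempty (region m) :=
  ⟨⟨(1 / 4, 0), by norm_num [region]⟩⟩

lemma nonempty_balancedBlock (hm : 0 < m) : Nonempty (BalancedBlock m) := by
  rw [← Fintype.card_pos_iff]
  have : (0 : ℝ) < Fintype.card (BalancedBlock m) :=
    (by positivity : (0 : ℝ) < 8 * m ^ 2).trans_le (BalancedBlock.eight_mul_sq_le_card m)
  exact_mod_cast this

lemma closedBall_subset_box (x : region m) (r : ℝ) :
    Metric.closedBall x r ⊆ Subtype.val ⁻¹' box 1 (x.1.1 - x.1.2) (2 * r) x.1.1 (2 * r) := by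
  intro y hy
  have fst_le : |y.1.1 - x.1.1| ≤ r := (le_max_left _ _).trans hy
  have snd_le : |y.1.2 - x.1.2| ≤ r := (le_max_right _ _).trans hy
  refine ⟨?_, fst_le.trans (by linarith [abs_nonneg (y.1.1 - x.1.1)])⟩
  calc |1 * y.1.1 - y.1.2 - (x.1.1 - x.1.2)| = |(y.1.1 - x.1.1) - (y.1.2 - x.1.2)| := by ring_nf
    _ ≤ |y.1.1 - x.1.1| + |y.1.2 - x.1.2| := abs_sub _ _
    _ ≤ 2 * r := by linarith

lemma add_half_le_dimH_gasket {α : ℝ≥0} (hα : α < 1) : (α : ℝ≥0∞) + 1 / 2 ≤ dimH gasket := by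
  obtain ⟨m, hm, hmα⟩ := exists_nat_mul_rpow_le (α := α) (b := 1000) (by exact_mod_cast hα)
    (by norm_num) 200000 100000
  have hm₀ : (0 : ℝ) < m := by linarith
  have := nonempty_balancedBlock (Nat.cast_pos.1 hm₀)
  obtain ⟨Λ, μ, _, hμ, hΛ, mem_image⟩ :=
    exists_isSelfSimilar (by norm_num : (1 / 2 : ℝ≥0) < 1) (lipschitzWith_blockMap hm)
  have ball (x : region m) (r : ℝ) (hr : 0 < r) : μ.real (Metric.closedBall x r) ≤
      ((100000 * m * 2) ^ (α : ℝ) * √(m ^ 2 * 2)) * r ^ ((α + 1 / 2 : ℝ≥0) : ℝ) :=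
    calc μ.real (Metric.closedBall x r)
        ≤ (100000 * m * (2 * r)) ^ (α : ℝ) * √(m ^ 2 * (2 * r)) :=
          (measureReal_mono (closedBall_subset_box x r)).trans
            (measureReal_box_le hμ α.2 hmα (by norm_num) (by positivity) le_rfl)
      _ = _ := by
          rw [← mul_assoc, ← mul_assoc, Real.mul_rpow (by positivity) hr.le,
            Real.sqrt_mul (by positivity), Real.sqrt_eq_rpow r, NNReal.coe_add,
            Real.rpow_add hr]
          push_cast
          ring
  have le_dimH := le_dimH_of_measureReal_closedBall_le (s := Λ) (by simp [hΛ]) (by positivity)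
    fun x _ => ball x
  push_cast at le_dimH
  exact le_dimH.trans (dimH_le_dimH_gasket hm mem_image)

end Dimension

end RauzyGasket

/-- The Hausdorff dimension of the Rauzy gasket is at least 3/2. -/
theorem rauzy_dimH_ge_three_halves : (3 / 2 : ENNReal) ≤ dimH gasket := by
  have half_le : 1 / 2 ≤ dimH gasket := by
    simpa using RauzyGasket.add_half_le_dimH_gasket zero_lt_one
  have one_le : 1 ≤ dimH gasket - 1 / 2 :=
    ENNReal.le_of_forall_nnreal_lt fun α hα => ENNReal.le_sub_of_add_le_right (by norm_num)
      (RauzyGasket.add_half_le_dimH_gasket (by exact_mod_cast hα))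
  calc (3 / 2 : ENNReal) = 1 + 1 / 2 := by
        rw [← two_add_one_eq_three, ENNReal.add_div,
          ENNReal.div_self two_ne_zero ENNReal.ofNat_ne_top]
    _ ≤ dimH gasket - 1 / 2 + 1 / 2 := by gcongr
    _ = dimH gasket := tsub_add_cancel_of_le half_le
end

section
/- Let w be a nonempty word with letters in {1,2,3} and let i ∈ {1,2,3} be a letter that occurs in w. Then the vector v = (A_w)ᵗ e_i (the transpose of A_w applied to the i-th standard basis vector of ℝ³) has all three coordinates strictly positive, and each coordinate of v is strictly smaller than the sum of the other two coordinates (i.e. v lies in the open projective triangle Δ' with vertices (0,1,1), (1,0,1), (1,1,0)). -/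
open Matrix MeasureTheory

/-!
Acting on row vectors, the `j`-th generator adds the `j`-th coordinate to each of the others, so
`(A_w)ᵗ e_i` arises from `e_i` by reading `w` from left to right. Letters other than `i` fix `e_i`;
the first occurrence of `i` turns it into `(1, …, 1)`, which lies in the open cone of positive
vectors each of whose coordinates is smaller than the sum of the others; and the remaining letters
preserve this cone. Nothing here is special to dimension three: adding `v j` to the other
coordinates increases the sum of all of them by at least `2 * v j` as soon as there are three.
-/

section RauzySemigroup

variable {ι R : Type*} [Fintype ι]

/-- The cone of positive vectors with each coordinate smaller than the sum of the others, written
with `v j` added to both sides. It is the open cone over the second hypersimplex, the convex hull of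
the vectors `e_i + e_j` with `i ≠ j`, which for `ι = Fin 3` is the triangle `Δ'`. -/
def openHypersimplexCone (ι R : Type*) [Fintype ι] [Semiring R] [LT R] : Set (ι → R) :=
  {v | ∀ j, 0 < v j ∧ 2 * v j < ∑ k, v k}

theorem one_mem_openHypersimplexCone [Semiring R] [PartialOrder R] [IsStrictOrderedRing R]
    (hι : 3 ≤ Fintype.card ι) : 1 ∈ openHypersimplexCone ι R := by
  have htwo_lt : (2 : R) < Fintype.card ι := by exact_mod_cast hι
  simpa [openHypersimplexCone] using fun _ : ι ↦ htwo_lt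

theorem mem_openHypersimplexCone_fin_three [CommRing R] [LinearOrder R] [IsStrictOrderedRing R]
    {v : Fin 3 → R} :
    v ∈ openHypersimplexCone (Fin 3) R ↔
      (∀ j, 0 < v j) ∧ v 0 < v 1 + v 2 ∧ v 1 < v 0 + v 2 ∧ v 2 < v 0 + v 1 := by
  simp only [openHypersimplexCone, Set.mem_ofPred_eq, forall_and, Fin.sum_univ_three,
    Fin.forall_fin_succ, Fin.forall_fin_zero]
  grind

variable [DecidableEq ι]

/-- The Rauzy generator of index `j` in arbitrary dimension: the identity matrix with its `j`-th row
replaced by ones. -/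
def rauzyMatrix {ι : Type*} [DecidableEq ι] (R : Type*) [Zero R] [One R] (j : ι) : Matrix ι ι R :=
  updateRow 1 j 1

section Ring

variable [Ring R]

theorem vecMul_rauzyMatrix (v : ι → R) (j : ι) :
    v ᵥ* rauzyMatrix R j = v + v j • (1 - Pi.single j 1) := by
  have hrank_one : rauzyMatrix R j = 1 + vecMulVec (Pi.single j 1) (1 - Pi.single j 1) := by
    ext k l
    by_cases hk : k = j <;>
      simp [rauzyMatrix, vecMulVec_apply, updateRow_apply, one_apply, Pi.single_apply, hk, eq_comm]
  rw [hrank_one, vecMul_add, vecMul_one, vecMul_vecMulVec, dotProduct_single_one]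

theorem sum_vecMul_rauzyMatrix (v : ι → R) (j : ι) :
    ∑ k, (v ᵥ* rauzyMatrix R j) k = ∑ k, v k + v j * (Fintype.card ι - 1) := by
  simp [vecMul_rauzyMatrix, Finset.sum_add_distrib, ← Finset.mul_sum]

theorem single_vecMul_rauzyMatrix_self (i : ι) : Pi.single i 1 ᵥ* rauzyMatrix R i = 1 := by
  simp [vecMul_rauzyMatrix]

theorem single_vecMul_rauzyMatrix_of_ne {i j : ι} (hij : i ≠ j) :
    Pi.single i 1 ᵥ* rauzyMatrix R j = Pi.single i 1 := by
  simp [vecMul_rauzyMatrix, hij.symm]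

theorem single_vecMul_prod_rauzyMatrix_of_notMem {i : ι} {w : List ι} (hi : i ∉ w) :
    Pi.single i 1 ᵥ* (w.map (rauzyMatrix R)).prod = Pi.single i 1 := by
  induction w with
  | nil => simp
  | cons j w ih =>
    obtain ⟨hij, hiw⟩ := List.ne_and_not_mem_of_not_mem_cons hi
    rw [List.map_cons, List.prod_cons, ← vecMul_vecMul, single_vecMul_rauzyMatrix_of_ne hij, ih hiw]

end Ring

variable [CommRing R] [LinearOrder R] [IsStrictOrderedRing R]

theorem vecMul_rauzyMatrix_mem_openHypersimplexCone (hι : 3 ≤ Fintype.card ι) {v : ι → R}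
    (hv : v ∈ openHypersimplexCone ι R) (j : ι) :
    v ᵥ* rauzyMatrix R j ∈ openHypersimplexCone ι R := by
  intro k
  obtain ⟨hk_pos, hk_lt⟩ := hv k
  have hj_pos : 0 < v j := (hv j).1
  have hentry : v k ≤ (v ᵥ* rauzyMatrix R j) k ∧ (v ᵥ* rauzyMatrix R j) k ≤ v k + v j := by
    by_cases hkj : k = j <;> simp [vecMul_rauzyMatrix, hkj, hj_pos.le]
  have htwo_le : (2 : R) ≤ Fintype.card ι - 1 := by
    have : (3 : R) ≤ Fintype.card ι := by exact_mod_cast hι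
    linarith
  refine ⟨hk_pos.trans_le hentry.1, ?_⟩
  calc 2 * (v ᵥ* rauzyMatrix R j) k
      ≤ 2 * v k + v j * 2 := by linarith [hentry.2]
    _ < ∑ l, v l + v j * (Fintype.card ι - 1) :=
        add_lt_add_of_lt_of_le hk_lt (mul_le_mul_of_nonneg_left htwo_le hj_pos.le)
    _ = ∑ l, (v ᵥ* rauzyMatrix R j) l := (sum_vecMul_rauzyMatrix v j).symm

theorem vecMul_prod_rauzyMatrix_mem_openHypersimplexCone (hι : 3 ≤ Fintype.card ι) (w : List ι)
    {v : ι → R} (hv : v ∈ openHypersimplexCone ι R) :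
    v ᵥ* (w.map (rauzyMatrix R)).prod ∈ openHypersimplexCone ι R := by
  induction w generalizing v with
  | nil => simpa using hv
  | cons j w ih =>
    rw [List.map_cons, List.prod_cons, ← vecMul_vecMul]
    exact ih (vecMul_rauzyMatrix_mem_openHypersimplexCone hι hv j)

theorem transpose_image_in_open_triangle_general (hι : 3 ≤ Fintype.card ι) {w : List ι} {i : ι}
    (hi : i ∈ w) :
    (w.map (rauzyMatrix R)).prodᵀ *ᵥ Pi.single i 1 ∈ openHypersimplexCone ι R := by
  obtain ⟨u, t, rfl, hiu⟩ := List.eq_append_cons_of_mem hi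
  rw [mulVec_transpose, List.map_append, List.prod_append, List.map_cons, List.prod_cons,
    ← vecMul_vecMul, ← vecMul_vecMul, single_vecMul_prod_rauzyMatrix_of_notMem hiu,
    single_vecMul_rauzyMatrix_self]
  exact vecMul_prod_rauzyMatrix_mem_openHypersimplexCone hι t (one_mem_openHypersimplexCone hι)

end RauzySemigroup

theorem A_eq_rauzyMatrix : A = rauzyMatrix ℝ := by
  ext j k l
  fin_cases j <;> fin_cases k <;> fin_cases l <;> simp [A, rauzyMatrix, updateRow_apply]

/-- If the letter `i` occurs in the nonempty word `w`, then `(A_w)ᵗ e_i` has strictly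
positive coordinates, each smaller than the sum of the other two. -/
theorem transpose_image_in_open_triangle (w : List (Fin 3)) (hw : w ≠ [])
    (i : Fin 3) (hi : i ∈ w) :
    (∀ j, 0 < ((Aw w)ᵀ *ᵥ basis3 i) j) ∧
    ((Aw w)ᵀ *ᵥ basis3 i) 0 < ((Aw w)ᵀ *ᵥ basis3 i) 1 + ((Aw w)ᵀ *ᵥ basis3 i) 2 ∧
    ((Aw w)ᵀ *ᵥ basis3 i) 1 < ((Aw w)ᵀ *ᵥ basis3 i) 0 + ((Aw w)ᵀ *ᵥ basis3 i) 2 ∧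
    ((Aw w)ᵀ *ᵥ basis3 i) 2 < ((Aw w)ᵀ *ᵥ basis3 i) 0 + ((Aw w)ᵀ *ᵥ basis3 i) 1 := by
  rw [← mem_openHypersimplexCone_fin_three, Aw, A_eq_rauzyMatrix]
  exact transpose_image_in_open_triangle_general (by simp) hi
end
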